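/- arXiv:math/0508126 — 3 statements merged into one kernel-verified Lean document; each statement's English description precedes it below -/
import Mathlib

section
/- Let q be a positive integer and let ξ be a Dirichlet character modulo q². Then there exists a residue class a (mod q) such that for every integer x with x ≡ 1 (mod q) and gcd(x, q) = 1, one has ξ(x) = e(a(x-1)/q²), where e(t) = exp(2πit). (Note (x-1)/q² · a is well defined modulo 1 since q² | a(x-1) up to the stated normalization: a(x-1)/q² depends modulo 1 only on x mod q² and on a mod q.) -/
/-- `e(t) = exp(2πit)`. -/
noncomputable def e (t : ℝ) : ℂ := Complex.exp (2 * Real.pi * Complex.I * t)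

/-!
If `d² = 0` in a commutative semiring, then `(1 + d b)(1 + d c) = 1 + d (b + c)`, so `c ↦ 1 + d c`
turns addition into multiplication. When `d ∣ N ∣ d²`, this applies to `d` modulo `N`: the map
`k ↦ ξ (1 + d k)` is an additive character of `ℤ`, trivial at `N / d`, so it is
`k ↦ e (a k / (N / d))` for some integer `a`, and `k / (N / d) = (x - 1) / N` for `x = 1 + d k`.
The theorem is the case `d = q`, `N = q²`.
-/

theorem e_intCast_mul (k : ℤ) (t : ℝ) : e (k * t) = e t ^ k := by
  rw [e, e, ← Complex.exp_int_mul]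
  push_cast
  ring_nf

theorem isPrimitiveRoot_e_inv {n : ℕ} (hn : n ≠ 0) : IsPrimitiveRoot (e (n : ℝ)⁻¹) n := by
  simpa [e, div_eq_mul_inv] using Complex.isPrimitiveRoot_exp n hn

theorem exists_forall_addChar_int_eq_e {n : ℕ} (hn : n ≠ 0) (f : AddChar ℤ ℂ) (hf : f n = 1) :
    ∃ a : ℤ, ∀ k : ℤ, f k = e ((a * k : ℤ) / n) := by
  have map_eq_zpow (k : ℤ) : f k = f 1 ^ k := by
    simpa using f.map_zsmul_eq_zpow k 1
  have map_one_pow : f 1 ^ n = 1 := by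
    rw [← zpow_natCast, ← map_eq_zpow, hf]
  have : NeZero n := ⟨hn⟩
  obtain ⟨a, -, ha⟩ := (isPrimitiveRoot_e_inv hn).eq_pow_of_pow_eq_one map_one_pow
  refine ⟨a, fun k ↦ ?_⟩
  rw [map_eq_zpow, ← ha, div_eq_mul_inv, e_intCast_mul, zpow_mul, zpow_natCast]

/-- The map `c ↦ 1 + d c` for an element `d` of square zero, as a homomorphism from the additive to
the multiplicative structure of the semiring. -/
def oneAddMulAddChar {R : Type*} [CommSemiring R] (d : R) (hd : d * d = 0) : AddChar R R where
  toFun c := 1 + d * c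
  map_zero_eq_one' := by simp
  map_add_eq_mul' b c :=
    calc 1 + d * (b + c) = 1 + d * (b + c) + d * d * (b * c) := by rw [hd, zero_mul, add_zero]
      _ = (1 + d * b) * (1 + d * c) := by ring

theorem dirichlet_char_sq_on_one_mod_q_general {N d : ℕ} (hN : N ≠ 0) (hdN : d ∣ N)
    (hNd : N ∣ d ^ 2) (ξ : DirichletCharacter ℂ N) :
    ∃ a : ℤ, ∀ x : ℤ, x ≡ 1 [ZMOD d] → ξ x = e ((a * (x - 1) : ℤ) / N) := by
  obtain ⟨m, rfl⟩ := hdN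
  have hd : (d : ZMod (d * m)) * d = 0 := by
    rwa [← Nat.cast_mul, ZMod.natCast_eq_zero_iff, ← sq]
  let f : AddChar ℤ ℂ :=
    (ξ.toMonoidHom.compAddChar (oneAddMulAddChar _ hd)).compAddMonoidHom (Int.castAddHom _)
  have f_apply (k : ℤ) : f k = ξ (1 + d * k) := rfl
  have f_m_eq_one : f m = 1 := by
    rw [f_apply, Int.cast_natCast, ← Nat.cast_mul, ZMod.natCast_self, add_zero, map_one]
  obtain ⟨a, ha⟩ := exists_forall_addChar_int_eq_e (right_ne_zero_of_mul hN) f f_m_eq_one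
  refine ⟨a, fun x hx ↦ ?_⟩
  obtain ⟨k, hk⟩ := hx.symm.dvd
  obtain rfl : x = 1 + d * k := by linarith
  have hd0 : (d : ℝ) ≠ 0 := Nat.cast_ne_zero.mpr (left_ne_zero_of_mul hN)
  calc ξ ((1 + d * k : ℤ) : ZMod (d * m)) = f k := by rw [f_apply]; push_cast; rfl
    _ = e ((a * k : ℤ) / m) := ha k
    _ = e ((a * (1 + d * k - 1) : ℤ) / (d * m : ℕ)) := by
      congr 1
      push_cast
      field_simp
      ring

/-- Every Dirichlet character `ξ` modulo `q²` restricts, on integers `x ≡ 1 (mod q)`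
coprime to `q`, to `x ↦ e(a(x-1)/q²)` for some residue class `a (mod q)`. -/
theorem dirichlet_char_sq_on_one_mod_q (q : ℕ) (hq : 0 < q)
    (ξ : DirichletCharacter ℂ (q ^ 2)) :
    ∃ a : ℤ, ∀ x : ℤ, x ≡ 1 [ZMOD (q : ℤ)] → Int.gcd x q = 1 →
      ξ (x : ZMod (q ^ 2)) = e (((a * (x - 1) : ℤ) : ℝ) / (q : ℝ) ^ 2) := by
  obtain ⟨a, ha⟩ := dirichlet_char_sq_on_one_mod_q_general (pow_pos hq 2).ne'
    (dvd_pow_self q two_ne_zero) dvd_rfl ξ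
  exact ⟨a, fun x hx _ ↦ by rw [ha x hx, Nat.cast_pow]⟩
end

section
/- Let q be a positive integer and a an integer. Let G_a denote the set of Dirichlet characters ξ modulo q² such that ξ(x) = e(a(x-1)/q²) for every integer x with x ≡ 1 (mod q) and gcd(x,q)=1, where e(t) = exp(2πit). Then G_a has exactly φ(q) elements, and for any fixed ξ ∈ G_a, every element of G_a is obtained in a unique way as ξ·χ where χ ranges over the Dirichlet characters modulo q² induced by Dirichlet characters modulo q. -/
/-- The set `G_a` of Dirichlet characters `ξ` modulo `q²` with
`ξ(x) = e(a(x-1)/q²)` for all integers `x ≡ 1 (mod q)` coprime to `q`. -/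
def Ga (q : ℕ) (a : ℤ) : Set (DirichletCharacter ℂ (q ^ 2)) :=
  {ξ | ∀ x : ℤ, x ≡ 1 [ZMOD (q : ℤ)] → Int.gcd x q = 1 →
    ξ (x : ZMod (q ^ 2)) = e (((a * (x - 1) : ℤ) : ℝ) / (q : ℝ) ^ 2)}

/-!
A member of `G_a` is a Dirichlet character modulo `q²` whose restriction to
`K = ker ((ℤ/q²)ˣ → (ℤ/q)ˣ)` is `u ↦ e(a(u - 1)/q²)`. This function is a character of `K` because
`uv - 1 = (u - 1) + (v - 1) + (u - 1)(v - 1)`, where the last product vanishes modulo `q²`; by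
duality for finite abelian groups it extends to `(ℤ/q²)ˣ`, so `G_a` is nonempty. Two characters
agree on `K` exactly when their quotient is induced from modulus `q`, so `G_a` is a coset of the
image of the injective map `changeLevel`, whose source has `φ(q)` elements.
-/

section OneUnits

variable {R S M : Type*} [CommRing R] [Ring S] [Monoid M] {f : R →+* S}

lemma val_sub_one_mem_ker {u : Rˣ} (hu : u ∈ (Units.map (f : R →* S)).ker) :
    (u : R) - 1 ∈ RingHom.ker f := by
  have hfu : f u = 1 := congrArg Units.val hu
  rw [RingHom.mem_ker, map_sub, map_one, hfu, sub_self]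

lemma val_mul_sub_one_eq_add (hf : RingHom.ker f ^ 2 = ⊥) {u v : Rˣ}
    (hu : u ∈ (Units.map (f : R →* S)).ker) (hv : v ∈ (Units.map (f : R →* S)).ker) :
    ((u * v : Rˣ) : R) - 1 = (u - 1) + (v - 1) := by
  have hprod : ((u : R) - 1) * (v - 1) = 0 := by
    rw [← Ideal.mem_bot, ← hf, pow_two]
    exact Ideal.mul_mem_mul (val_sub_one_mem_ker hu) (val_sub_one_mem_ker hv)
  rw [Units.val_mul]
  linear_combination hprod

/-- The multiplicative character `u ↦ ψ (u - 1)` that an additive character `ψ` of `R` induces on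
the units congruent to `1` modulo a square-zero ideal, the ideal being given as the kernel of a
ring homomorphism `f`. -/
def oneUnitsHom (hf : RingHom.ker f ^ 2 = ⊥) (ψ : AddChar R M) :
    (Units.map (f : R →* S)).ker →* M where
  toFun u := ψ ((u : Rˣ) - 1)
  map_one' := by simp
  map_mul' u v := by
    rw [Subgroup.coe_mul, val_mul_sub_one_eq_add hf u.2 v.2, AddChar.map_add_eq_mul]

end OneUnits

lemma exists_mulChar_extending {M R : Type*} [CommMonoid M] [Finite Mˣ] [CommRing R] [IsDomain R]
    [HasEnoughRootsOfUnity R (Monoid.exponent Mˣ)] {H : Subgroup Mˣ} (f : H →* R) :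
    ∃ χ : MulChar M R, ∀ u : H, χ (u : Mˣ) = f u := by
  obtain ⟨g, hg⟩ := MonoidHom.domRestrict_surjective R H f.toHomUnits
  refine ⟨MulChar.ofUnitHom g, fun u ↦ ?_⟩
  rw [MulChar.ofUnitHom_coe, ← f.coe_toHomUnits u, ← hg]
  rfl

lemma mulChar_inv_mul_apply_coe_eq_one_iff {M R : Type*} [CommMonoid M] [CommMonoidWithZero R]
    {χ χ' : MulChar M R} {u : Mˣ} : (χ⁻¹ * χ') u = 1 ↔ χ' u = χ u := by
  constructor
  · intro h
    calc χ' u = (χ * (χ⁻¹ * χ')) u := by rw [mul_inv_cancel_left]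
      _ = χ u := by rw [MulChar.mul_apply, h, mul_one]
  · intro h
    rw [MulChar.mul_apply, h, ← MulChar.mul_apply, inv_mul_cancel, MulChar.one_apply_coe]

lemma ker_castHom_sq_eq_bot {d n : ℕ} (hd : d ∣ n) (hn : n ∣ d ^ 2) :
    RingHom.ker (ZMod.castHom hd (ZMod d)) ^ 2 = ⊥ := by
  rw [pow_two, eq_bot_iff, Ideal.mul_le]
  intro r hr s hs
  obtain ⟨x, rfl⟩ := ZMod.intCast_surjective r
  obtain ⟨y, rfl⟩ := ZMod.intCast_surjective s
  rw [RingHom.mem_ker, map_intCast, ZMod.intCast_zmod_eq_zero_iff_dvd] at hr hs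
  rw [Ideal.mem_bot, ← Int.cast_mul, ZMod.intCast_zmod_eq_zero_iff_dvd]
  calc (n : ℤ) ∣ (d : ℤ) ^ 2 := mod_cast hn
    _ = d * d := pow_two _
    _ ∣ x * y := mul_dvd_mul hr hs

section ChangeLevel

open DirichletCharacter

variable {R : Type*} {d n : ℕ}

lemma exists_dirichletCharacter_eq_addChar_sub_one [CommRing R] [IsDomain R]
    [HasEnoughRootsOfUnity R (Monoid.exponent (ZMod n)ˣ)] (hd : d ∣ n) (hn : n ∣ d ^ 2)
    (ψ : AddChar (ZMod n) R) :
    ∃ ξ : DirichletCharacter R n, ∀ u ∈ (ZMod.unitsMap hd).ker, ξ u = ψ (u - 1) := by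
  obtain ⟨ξ, hξ⟩ := exists_mulChar_extending (oneUnitsHom (ker_castHom_sq_eq_bot hd hn) ψ)
  exact ⟨ξ, fun u hu ↦ hξ ⟨u, hu⟩⟩

variable [CommMonoidWithZero R] [NeZero n]

lemma mul_changeLevel_injective (hd : d ∣ n) (ξ : DirichletCharacter R n) :
    Function.Injective fun χ₀ : DirichletCharacter R d ↦ ξ * changeLevel hd χ₀ :=
  (mul_right_injective ξ).comp (changeLevel_injective hd)

lemma factorsThrough_iff_forall_mem_ker (hd : d ∣ n) {χ : DirichletCharacter R n} :
    χ.FactorsThrough d ↔ ∀ u ∈ (ZMod.unitsMap hd).ker, χ u = 1 := by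
  simp only [factorsThrough_iff_ker_unitsMap hd, SetLike.le_def,
    MonoidHom.mem_ker (f := χ.toUnitHom), Units.ext_iff, MulChar.coe_toUnitHom, Units.val_one]

lemma range_mul_changeLevel (hd : d ∣ n) (ξ : DirichletCharacter R n) :
    Set.range (fun χ₀ : DirichletCharacter R d ↦ ξ * changeLevel hd χ₀) =
      {ξ' | ∀ u ∈ (ZMod.unitsMap hd).ker, ξ' u = ξ u} := by
  ext ξ'
  have mem_range_iff : ξ' ∈ Set.range (fun χ₀ : DirichletCharacter R d ↦ ξ * changeLevel hd χ₀) ↔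
      (ξ⁻¹ * ξ').FactorsThrough d := by
    simp only [Set.mem_range, FactorsThrough, hd, exists_true_left, inv_mul_eq_iff_eq_mul, eq_comm]
  simp only [mem_range_iff, factorsThrough_iff_forall_mem_ker hd,
    mulChar_inv_mul_apply_coe_eq_one_iff, Set.mem_ofPred_eq]

end ChangeLevel

lemma e_div_eq_stdAddChar {n : ℕ} [NeZero n] (j : ℤ) :
    e ((j : ℝ) / n) = ZMod.stdAddChar (j : ZMod n) := by
  rw [ZMod.stdAddChar_coe, e, mul_div_assoc]
  norm_cast

lemma mem_ker_unitsMap_iff_modEq_one {d n : ℕ} (hd : d ∣ n) {u : (ZMod n)ˣ} {x : ℤ}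
    (hx : (x : ZMod n) = u) : u ∈ (ZMod.unitsMap hd).ker ↔ x ≡ 1 [ZMOD d] := by
  rw [MonoidHom.mem_ker, Units.ext_iff, ZMod.unitsMap_val, ← hx, ZMod.cast_intCast hd,
    Units.val_one, ← ZMod.intCast_eq_intCast_iff, Int.cast_one]

lemma mem_Ga_iff {q : ℕ} [NeZero q] {a : ℤ} {ξ : DirichletCharacter ℂ (q ^ 2)} :
    ξ ∈ Ga q a ↔ ∀ u ∈ (ZMod.unitsMap (dvd_pow_self q two_ne_zero)).ker,
      ξ u = (ZMod.stdAddChar.mulShift (a : ZMod (q ^ 2))) (u - 1) := by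
  simp only [Ga, Set.mem_ofPred_eq, ← Nat.cast_pow, e_div_eq_stdAddChar, AddChar.mulShift_apply]
  push_cast
  constructor
  · intro h u hu
    obtain ⟨x, hx⟩ := ZMod.intCast_surjective (u : ZMod (q ^ 2))
    have hcop : IsCoprime ((q ^ 2 : ℕ) : ℤ) x :=
      (ZMod.coe_int_isUnit_iff_isCoprime x _).1 (hx ▸ u.isUnit)
    push_cast at hcop
    rw [← hx]
    exact h x ((mem_ker_unitsMap_iff_modEq_one _ hx).1 hu)
      (Int.isCoprime_iff_gcd_eq_one.1 ((IsCoprime.pow_left_iff two_pos).1 hcop).symm)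
  · intro h x hmod hgcd
    have hcop : IsCoprime x ((q ^ 2 : ℕ) : ℤ) := by
      push_cast
      exact (Int.isCoprime_iff_gcd_eq_one.2 hgcd).pow_right
    simpa only [ZMod.coe_unitOfIsCoprime] using h (ZMod.unitOfIsCoprime x hcop)
      ((mem_ker_unitsMap_iff_modEq_one _ (ZMod.coe_unitOfIsCoprime x hcop).symm).2 hmod)

lemma Ga_nonempty (q : ℕ) [NeZero q] (a : ℤ) : (Ga q a).Nonempty := by
  obtain ⟨ξ, hξ⟩ := exists_dirichletCharacter_eq_addChar_sub_one
    (dvd_pow_self q two_ne_zero) dvd_rfl (ZMod.stdAddChar.mulShift (a : ZMod (q ^ 2)))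
  exact ⟨ξ, mem_Ga_iff.2 hξ⟩

lemma Ga_eq_range_mul_changeLevel {q : ℕ} [NeZero q] {a : ℤ} {ξ : DirichletCharacter ℂ (q ^ 2)}
    (hξ : ξ ∈ Ga q a) :
    Ga q a = Set.range fun χ₀ : DirichletCharacter ℂ q ↦
      ξ * DirichletCharacter.changeLevel (dvd_pow_self q two_ne_zero) χ₀ := by
  ext ξ'
  rw [range_mul_changeLevel, Set.mem_ofPred_eq, mem_Ga_iff]
  exact forall₂_congr fun u hu ↦ by rw [mem_Ga_iff.1 hξ u hu]

/-- `G_a` has exactly `φ(q)` elements, and for any fixed `ξ ∈ G_a`, every element of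
`G_a` is obtained in a unique way as `ξ·χ`, where `χ` ranges over the characters modulo
`q²` induced (by change of level) by Dirichlet characters modulo `q`. -/
theorem card_Ga_and_unique_factorization (q : ℕ) (hq : 0 < q) (a : ℤ) :
    Nat.card (Ga q a) = Nat.totient q ∧
      ∀ ξ ∈ Ga q a, ∀ ξ' ∈ Ga q a,
        ∃! χ₀ : DirichletCharacter ℂ q,
          ξ' = ξ * DirichletCharacter.changeLevel (dvd_pow_self q two_ne_zero) χ₀ := by
  have : NeZero q := ⟨hq.ne'⟩
  constructor
  · obtain ⟨ξ, hξ⟩ := Ga_nonempty q a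
    rw [Ga_eq_range_mul_changeLevel hξ, Nat.card_range_of_injective (mul_changeLevel_injective _ ξ),
      DirichletCharacter.card_eq_totient_of_hasEnoughRootsOfUnity]
  · intro ξ hξ ξ' hξ'
    rw [Ga_eq_range_mul_changeLevel hξ] at hξ'
    simpa only [eq_comm] using (mul_changeLevel_injective _ ξ).existsUnique_of_mem_range hξ'
end

section
/- (Weil bound for Kloosterman sums) For any positive integer c and any integers m and n, |Σ_{a,d mod c, ad ≡ 1 (mod c)} e((ma + nd)/c)| ≤ gcd(m, n, c)^{1/2} · c^{1/2} · τ(c), where e(t) = exp(2πit), the sum runs over residues a mod c that are invertible with d the inverse of a modulo c, and τ(c) is the number of divisors of c. -/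
/-!
Let `q` be an even power of an odd prime `p`. The `x ∈ 𝔽_q` with `Tr (x + n / x) = t` are the
abscissae of the points with `y ^ q = y + t` of the curve `x + n / x = y ^ p - y`. Following
Stepanov, a dimension count produces a nonzero function `G(y) x + H(y)` on this curve, with `G` and
`H` of degree about `q / 2`, whose `√q`-th power vanishes at these points; so there are at most
`q / p + O(√q)` such `x` for each `t`. This gives `‖S_q‖ = O(√q)` for the Kloosterman sum `S_q` over
`𝔽_q`. Passing to the quadratic extension replaces `S_q` by `2 q - S_q ^ 2`, so `S_q / √q` follows
an orbit of `t ↦ 2 - t ^ 2`, and such an orbit is bounded only if it starts in `|t| ≤ 2`.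

Modulo `p ^ k` with `k ≥ 2`, the sum localises at the approximate solutions of `m a ^ 2 = n`
(stationary phase); these are counted directly for `p = 2`, and for odd `p` each of them contributes
a quadratic Gauss sum. Composite moduli follow by the Chinese remainder theorem.
-/

open Polynomial

theorem exists_ne_zero_sum_smul_eq_zero {k M ι : Type*} [Field k] [AddCommGroup M] [Module k M]
    [Fintype ι] {W : Submodule k M} [FiniteDimensional k W] {w : ι → M} (hw : ∀ i, w i ∈ W)
    (h : Module.finrank k W < Fintype.card ι) :
    ∃ c : ι → k, c ≠ 0 ∧ ∑ i, c i • w i = 0 := by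
  have hdep : ¬ LinearIndependent k (fun i ↦ (⟨w i, hw i⟩ : W)) :=
    fun hind ↦ h.not_ge hind.fintype_card_le_finrank
  obtain ⟨c, hsum, i, hi⟩ := Fintype.not_linearIndependent_iff.mp hdep
  exact ⟨c, Function.ne_iff.mpr ⟨i, hi⟩, by simpa using congrArg W.subtype hsum⟩

/-- The coordinate ring `k[y][x] / (x² - f(y) x + n)` of the affine plane curve `x + n / x = f(y)`.
The polynomial variable of the base ring `k[X]` plays the role of `y`. -/
noncomputable abbrev KloostermanRing {k : Type*} [Field k] (f : k[X]) (n : kˣ) : Type _ :=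
  AdjoinRoot (X ^ 2 - C f * X + C (C (n : k)) : k[X][X])

namespace KloostermanRing

variable {k : Type*} [Field k] (f : k[X]) (n : kˣ)

/-- The coordinate function `y` on the curve `x + n / x = f(y)`. -/
noncomputable def y : KloostermanRing f n := AdjoinRoot.of _ X

theorem aeval_y (g : k[X]) : aeval (y f n) g = AdjoinRoot.of _ g := by
  rw [y, ← AdjoinRoot.algebraMap_eq, aeval_algebraMap_apply, aeval_X_left_apply]

theorem root_mul_aeval_sub_root :
    AdjoinRoot.root (X ^ 2 - C f * X + C (C (n : k))) * (aeval (y f n) f - AdjoinRoot.root _) =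
      algebraMap k (KloostermanRing f n) n := by
  have hrel := AdjoinRoot.mk_self (f := (X ^ 2 - C f * X + C (C (n : k)) : k[X][X]))
  simp only [map_add, map_sub, map_mul, map_pow, AdjoinRoot.mk_X, AdjoinRoot.mk_C] at hrel
  rw [aeval_y, AdjoinRoot.algebraMap_eq']
  simp only [RingHom.comp_apply, ← C_eq_algebraMap]
  linear_combination -hrel

/-- The coordinate function `x` on the curve `x + n / x = f(y)`, which is invertible there. -/
noncomputable def x : (KloostermanRing f n)ˣ :=
  Units.mkOfMulEqOne (AdjoinRoot.root _)
    ((aeval (y f n) f - AdjoinRoot.root _) * algebraMap k _ ↑n⁻¹) <| by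
    rw [← mul_assoc, root_mul_aeval_sub_root, ← map_mul, Units.mul_inv, map_one]

theorem x_add_mul_inv :
    (x f n : KloostermanRing f n) + algebraMap k _ n * ↑(x f n)⁻¹ = aeval (y f n) f := by
  have hn : algebraMap k (KloostermanRing f n) n * algebraMap k _ ↑n⁻¹ = 1 := by
    rw [← map_mul, Units.mul_inv, map_one]
  have hx : (x f n : KloostermanRing f n) = AdjoinRoot.root _ := rfl
  have hinv : (x f n)⁻¹.val =
    (aeval (y f n) f - AdjoinRoot.root _) * algebraMap k _ ↑n⁻¹ := rfl
  rw [hx, hinv]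
  linear_combination (aeval (y f n) f - AdjoinRoot.root _) * hn

/-- The regular function `G(y) x + H(y)` on the curve `x + n / x = f(y)` attached to `(G, H)`. -/
noncomputable def ofPair : k[X] × k[X] →ₗ[k] KloostermanRing f n :=
  (LinearMap.mulRight k (x f n : KloostermanRing f n) ∘ₗ (aeval (y f n)).toLinearMap).coprod
    (aeval (y f n)).toLinearMap

theorem ofPair_apply (G H : k[X]) :
    ofPair f n (G, H) = aeval (y f n) G * x f n + aeval (y f n) H := rfl

theorem x_mul_ofPair (G H : k[X]) :
    x f n * ofPair f n (G, H) = ofPair f n (G * f + H, -C (n : k) * G) := by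
  have hinv : (x f n : KloostermanRing f n) * ↑(x f n)⁻¹ = 1 := Units.mul_inv _
  simp only [ofPair_apply, map_add, map_mul, map_neg, aeval_C]
  linear_combination aeval (y f n) G * x f n * x_add_mul_inv f n
    - aeval (y f n) G * algebraMap k _ n * hinv

theorem x_inv_mul_ofPair (G H : k[X]) :
    (x f n)⁻¹.val * ofPair f n (G, H) =
      ofPair f n (-C (↑n⁻¹ : k) * H, G + C (↑n⁻¹ : k) * H * f) := by
  have hinv : (x f n : KloostermanRing f n) * ↑(x f n)⁻¹ = 1 := Units.mul_inv _
  have hn : algebraMap k (KloostermanRing f n) n * algebraMap k _ ↑n⁻¹ = 1 := by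
    rw [← map_mul, Units.mul_inv, map_one]
  simp only [ofPair_apply, map_add, map_mul, map_neg, aeval_C]
  linear_combination aeval (y f n) G * hinv
    + algebraMap k _ ↑n⁻¹ * aeval (y f n) H * x_add_mul_inv f n
    - ↑(x f n)⁻¹ * aeval (y f n) H * hn

/-- The regular functions `G(y) x + H(y)` with `G` and `H` of degree less than `D`. -/
noncomputable def degreeLTPart (D : ℕ) : Submodule k (KloostermanRing f n) :=
  LinearMap.range (ofPair f n ∘ₗ (degreeLT k D).subtype.prodMap (degreeLT k D).subtype)

instance (D : ℕ) : FiniteDimensional k (degreeLT k D) :=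
  Module.Finite.equiv (degreeLTEquiv k D).symm

instance (D : ℕ) : FiniteDimensional k (degreeLTPart f n D) :=
  Module.Finite.range _

theorem finrank_degreeLTPart_le (D : ℕ) : Module.finrank k (degreeLTPart f n D) ≤ 2 * D := by
  refine (LinearMap.finrank_range_le _).trans_eq ?_
  rw [Module.finrank_prod, (degreeLTEquiv k D).finrank_eq, Module.finrank_fin_fun, two_mul]

variable {f n}

theorem mem_degreeLTPart {D : ℕ} {F : KloostermanRing f n} :
    F ∈ degreeLTPart f n D ↔ ∃ G ∈ degreeLT k D, ∃ H ∈ degreeLT k D, ofPair f n (G, H) = F := by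
  constructor
  · rintro ⟨⟨G, H⟩, rfl⟩
    exact ⟨G, G.2, H, H.2, rfl⟩
  · rintro ⟨G, hG, H, hH, rfl⟩
    exact ⟨(⟨G, hG⟩, ⟨H, hH⟩), rfl⟩

theorem degreeLTPart_mono {D D' : ℕ} (h : D ≤ D') : degreeLTPart f n D ≤ degreeLTPart f n D' := by
  intro F hF
  obtain ⟨G, hG, H, hH, rfl⟩ := mem_degreeLTPart.mp hF
  exact mem_degreeLTPart.mpr ⟨G, degreeLT_mono h hG, H, degreeLT_mono h hH, rfl⟩

theorem mul_mem_degreeLT {D d : ℕ} {g h : k[X]} (hg : g ∈ degreeLT k D) (hh : h.natDegree ≤ d) :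
    g * h ∈ degreeLT k (D + d) := by
  rcases eq_or_ne g 0 with rfl | hg0
  · simp
  rw [mem_degreeLT, degree_lt_iff_coeff_zero]
  have hgD : g.natDegree < D := (natDegree_lt_iff_degree_lt hg0).mpr (mem_degreeLT.mp hg)
  exact fun j hj ↦ coeff_eq_zero_of_natDegree_lt (natDegree_mul_le.trans_lt (by omega))

theorem C_mul_mem_degreeLT {D : ℕ} (c : k) {g : k[X]} (hg : g ∈ degreeLT k D) :
    C c * g ∈ degreeLT k D := by
  rw [← smul_eq_C_mul]
  exact Submodule.smul_mem _ c hg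

theorem x_mul_mem_degreeLTPart {D : ℕ} {F : KloostermanRing f n} (hF : F ∈ degreeLTPart f n D) :
    x f n * F ∈ degreeLTPart f n (D + f.natDegree) := by
  obtain ⟨G, hG, H, hH, rfl⟩ := mem_degreeLTPart.mp hF
  have hmono := degreeLT_mono (R := k) (Nat.le_add_right D f.natDegree)
  rw [x_mul_ofPair, ← C_neg]
  exact mem_degreeLTPart.mpr ⟨_, add_mem (mul_mem_degreeLT hG le_rfl) (hmono hH), _,
    hmono (C_mul_mem_degreeLT _ hG), rfl⟩

theorem x_inv_mul_mem_degreeLTPart {D : ℕ} {F : KloostermanRing f n}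
    (hF : F ∈ degreeLTPart f n D) :
    (x f n)⁻¹.val * F ∈ degreeLTPart f n (D + f.natDegree) := by
  obtain ⟨G, hG, H, hH, rfl⟩ := mem_degreeLTPart.mp hF
  have hmono := degreeLT_mono (R := k) (Nat.le_add_right D f.natDegree)
  rw [x_inv_mul_ofPair, ← C_neg]
  exact mem_degreeLTPart.mpr ⟨_, hmono (C_mul_mem_degreeLT _ hH), _,
    add_mem (hmono hG) (mul_mem_degreeLT (C_mul_mem_degreeLT _ hH) le_rfl), rfl⟩

theorem x_zpow_mul_mem_degreeLTPart {D : ℕ} {F : KloostermanRing f n}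
    (hF : F ∈ degreeLTPart f n D) (z : ℤ) :
    (x f n ^ z).val * F ∈ degreeLTPart f n (D + f.natDegree * z.natAbs) := by
  induction z with
  | zero => simpa using hF
  | succ j ih =>
    rw [← Nat.cast_succ, Int.natAbs_natCast, Nat.mul_succ, ← add_assoc, zpow_natCast,
      pow_succ' (x f n), Units.val_mul, mul_assoc]
    exact x_mul_mem_degreeLTPart (by simpa using ih)
  | pred j ih =>
    rw [show -(j : ℤ) - 1 = -((j + 1 : ℕ) : ℤ) by push_cast; ring, Int.natAbs_neg,
      Int.natAbs_natCast, Nat.mul_succ, ← add_assoc, zpow_neg, zpow_natCast, ← inv_pow,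
      pow_succ' (x f n)⁻¹, Units.val_mul, mul_assoc]
    exact x_inv_mul_mem_degreeLTPart (by simpa using ih)

theorem aeval_y_mul_x_zpow_mem_degreeLTPart {D : ℕ} {g : k[X]} {z : ℤ}
    (h : g.natDegree + f.natDegree * z.natAbs < D) :
    aeval (y f n) g * (x f n ^ z).val ∈ degreeLTPart f n D := by
  have hg : aeval (y f n) g ∈ degreeLTPart f n (g.natDegree + 1) := by
    refine mem_degreeLTPart.mpr ⟨0, zero_mem _, g, ?_, by simp [ofPair_apply]⟩
    exact mem_degreeLT.mpr (degree_le_natDegree.trans_lt (mod_cast Nat.lt_succ_self _))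
  rw [mul_comm (aeval _ g)]
  exact degreeLTPart_mono (by omega) (x_zpow_mul_mem_degreeLTPart hg z)

section LinearIndependence

variable {k : Type*} [Field k]

/-- The substitution `y ↦ t`, `x ↦ s t ^ d` into `k[s][t]`, whose `t`-degree is the weight `a + d b`
of the monomial `y ^ a x ^ b`: at infinity `x` has the same order as `y ^ d`. -/
noncomputable def weightHom (d : ℕ) : k[X][X] →+* k[X][X] :=
  eval₂RingHom (mapRingHom C) (C X * X ^ d)

theorem weightHom_monomial (d : ℕ) (c : k) (a b : ℕ) :
    weightHom d (C (C c * X ^ a) * X ^ b) = C (C c * X ^ b) * X ^ (a + d * b) := by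
  simp only [weightHom, coe_eval₂RingHom, eval₂_mul, eval₂_C, eval₂_pow, eval₂_X, coe_mapRingHom,
    map_C, map_X, C_mul, C_pow]
  ring

theorem leadingCoeff_weightHom_relation {f : k[X]} (hf : f.Monic) (hd : f.natDegree ≠ 0) (n : k) :
    (weightHom f.natDegree (X ^ 2 - C f * X + C (C n))).leadingCoeff = X ^ 2 - X := by
  set d := f.natDegree
  have hsplit : weightHom d (X ^ 2 - C f * X + C (C n)) =
      (C (C n) - C X * X ^ d * (f - X ^ d).map C) + C (X ^ 2 - X) * X ^ (2 * d) := by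
    simp only [weightHom, coe_eval₂RingHom, eval₂_mul, eval₂_C, eval₂_pow, eval₂_X, coe_mapRingHom,
      eval₂_add, eval₂_sub, Polynomial.map_pow, map_C, map_X, C_pow, Polynomial.map_sub, C_sub]
    ring
  have hlower : ((f - X ^ d).map (C : k →+* k[X])).degree < (d : WithBot ℕ) := by
    refine degree_map_le.trans_lt ?_
    have hdeg : f.degree = (X ^ d : k[X]).degree := by
      rw [degree_X_pow, degree_eq_natDegree hf.ne_zero]
    exact (degree_sub_lt_left hdeg hf.ne_zero (by simp [hf.leadingCoeff])).trans_eq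
      (degree_eq_natDegree hf.ne_zero)
  have hne : (X ^ 2 - X : k[X]) ≠ 0 := fun h ↦ by simpa [coeff_X] using congrArg (coeff · 2) h
  rw [hsplit, leadingCoeff_add_of_degree_lt, leadingCoeff_mul, leadingCoeff_C, leadingCoeff_X_pow,
    mul_one]
  rw [degree_C_mul_X_pow _ hne]
  refine (degree_sub_le _ _).trans_lt (max_lt ?_ ?_)
  · exact degree_C_le.trans_lt (by exact_mod_cast (by omega))
  · rw [degree_mul, two_mul, Nat.cast_add]
    exact WithBot.add_lt_add_of_le_of_lt (by simp) (degree_C_mul_X_pow_le _ _) hlower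

theorem exists_leadingCoeff_sum_eq {ι R : Type*} [Fintype ι] [Semiring R] {w : ι → ℕ}
    (hw : Function.Injective w) {r : ι → R} (hr : r ≠ 0) :
    ∃ i, r i ≠ 0 ∧ (∑ i, C (r i) * X ^ w i).leadingCoeff = r i := by
  set F : R[X] := ∑ i, C (r i) * X ^ w i with hF
  have hcoeff (i : ι) : F.coeff (w i) = r i := by
    classical simp [hF, finsetSum_coeff, coeff_X_pow, hw.eq_iff]
  obtain ⟨i₀, hi₀⟩ := Function.ne_iff.mp hr
  have hF0 : F ≠ 0 := fun h ↦ hi₀ (by simpa [h] using (hcoeff i₀).symm)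
  have hlead : F.leadingCoeff ≠ 0 := leadingCoeff_ne_zero.mpr hF0
  obtain ⟨i, hi⟩ : ∃ i, F.natDegree = w i := by
    by_contra! hcon
    refine hlead ?_
    rw [leadingCoeff, hF, finsetSum_coeff, ← hF]
    exact Finset.sum_eq_zero fun i _ ↦ by rw [coeff_C_mul_X_pow, if_neg (hcon i)]
  have hri : F.leadingCoeff = r i := by rw [leadingCoeff, hi, hcoeff]
  exact ⟨i, hri ▸ hlead, hri⟩

variable {f : k[X]} {n : kˣ} {ι : Type*} [Fintype ι]

theorem sum_smul_y_pow_mul_x_pow_ne_zero (hf : f.Monic) (hd : f.natDegree ≠ 0) {c : ι → k}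
    (hc : c ≠ 0) {a b : ι → ℕ} (hw : Function.Injective fun i ↦ a i + f.natDegree * b i) :
    ∑ i, c i • (y f n ^ a i * x f n ^ b i) ≠ 0 := by
  intro hzero
  have hdvd : (X ^ 2 - C f * X + C (C (n : k)) : k[X][X]) ∣
      ∑ i, C (C (c i) * X ^ a i) * X ^ b i := by
    rw [← AdjoinRoot.mk_eq_zero, ← hzero, map_sum]
    refine Finset.sum_congr rfl fun i _ ↦ ?_
    simp only [map_mul, map_pow, AdjoinRoot.mk_X, AdjoinRoot.mk_C, Algebra.smul_def, mul_assoc]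
    rfl
  obtain ⟨Q, hQ⟩ := map_dvd (weightHom f.natDegree) hdvd
  simp only [map_sum, weightHom_monomial] at hQ
  have hr : (fun i ↦ C (c i) * X ^ b i) ≠ 0 := by
    obtain ⟨i, hi⟩ := Function.ne_iff.mp hc
    exact Function.ne_iff.mpr ⟨i, by simpa using hi⟩
  obtain ⟨i, hri, hlead⟩ := exists_leadingCoeff_sum_eq hw hr
  have hfactor := congrArg leadingCoeff hQ
  rw [hlead, leadingCoeff_mul, leadingCoeff_weightHom_relation hf hd] at hfactor
  -- `X² - X` vanishes at `1`, the monomial `c X ^ b` does not.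
  have hci : c i = 0 := by simpa using congrArg (eval 1) hfactor
  exact hri (by simp [hci])

theorem sum_smul_y_pow_mul_x_zpow_ne_zero (hf : f.Monic) (hd : f.natDegree ≠ 0) {c : ι → k}
    (hc : c ≠ 0) {a : ι → ℕ} {b : ι → ℤ}
    (hw : Function.Injective fun i ↦ a i + f.natDegree * b i) :
    ∑ i, c i • (y f n ^ a i * (x f n ^ b i).val) ≠ 0 := by
  intro hzero
  obtain ⟨N, hN⟩ : ∃ N : ℕ, ∀ i, 0 ≤ b i + N := by
    refine ⟨∑ i, (b i).natAbs, fun i ↦ ?_⟩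
    have := Finset.single_le_sum (f := fun i ↦ (b i).natAbs) (fun _ _ ↦ Nat.zero_le _)
      (Finset.mem_univ i)
    omega
  choose b' hb' using fun i ↦ Int.eq_ofNat_of_zero_le (hN i)
  have hinj : Function.Injective fun i ↦ a i + f.natDegree * b' i := by
    intro i j hij
    have hij' : (a i : ℤ) + f.natDegree * b' i = a j + f.natDegree * b' j := by exact_mod_cast hij
    rw [← hb', ← hb'] at hij'
    exact hw (show (a i : ℤ) + f.natDegree * b i = a j + f.natDegree * b j by linarith)
  refine sum_smul_y_pow_mul_x_pow_ne_zero (n := n) hf hd hc hinj ?_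
  rw [← zero_mul (x f n ^ N).val, ← hzero, Finset.sum_mul]
  refine Finset.sum_congr rfl fun i _ ↦ ?_
  rw [smul_mul_assoc, mul_assoc, ← Units.val_mul, ← zpow_natCast (x f n) N, ← zpow_add, hb',
    zpow_natCast, Units.val_pow_eq_pow_val]

end LinearIndependence

section Points

variable {k : Type*} [Field k] {f : k[X]} {n : kˣ} {S : Type*} [CommRing S] [Algebra k S]

/-- Evaluation of regular functions at the point `(u, v)` of the curve `x + n / x = f(y)`. -/
noncomputable def evalAt (u : Sˣ) (v : S)
    (h : u + algebraMap k S n * ↑u⁻¹ = aeval v f) : KloostermanRing f n →ₐ[k] S :=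
  AdjoinRoot.liftAlgHom _ (aeval v) u <| by
    have hu : (u : S) * ↑u⁻¹ = 1 := Units.mul_inv u
    simp only [eval₂_add, eval₂_sub, eval₂_mul, eval₂_C, eval₂_pow, eval₂_X, RingHom.coe_coe,
      aeval_C]
    linear_combination (u : S) * h - algebraMap k S n * hu

variable {u : Sˣ} {v : S} (h : u + algebraMap k S n * ↑u⁻¹ = aeval v f)

theorem evalAt_aeval_y (g : k[X]) : evalAt u v h (aeval (y f n) g) = aeval v g := by
  rw [aeval_y]
  exact AdjoinRoot.liftAlgHom_of _ (aeval v) _ _ g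

theorem evalAt_y : evalAt u v h (y f n) = v := by
  simpa using evalAt_aeval_y h X

theorem evalAt_x : evalAt u v h (x f n) = u :=
  AdjoinRoot.liftAlgHom_root _ (aeval v) _ _

theorem evalAt_x_zpow (z : ℤ) : evalAt u v h (x f n ^ z).val = (u ^ z).val := by
  have hmap : Units.map (evalAt u v h : KloostermanRing f n →* S) (x f n) = u :=
    Units.ext (evalAt_x h)
  conv_rhs => rw [← hmap, ← map_zpow]
  rfl

theorem evalAt_ofPair (G H : k[X]) :
    evalAt u v h (ofPair f n (G, H)) = aeval v G * u + aeval v H := by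
  simp only [ofPair_apply, map_add, map_mul, evalAt_aeval_y, evalAt_x]

theorem aeval_eq_zero_of_forall_evalAt_eq_zero [IsDomain S] {q : ℕ} (hn : n ^ q = n)
    (hpt : u + algebraMap k S n * ↑u⁻¹ = aeval v f) {G H : k[X]}
    (hvan : ∀ (w : Sˣ) (h : w + algebraMap k S n * ↑w⁻¹ = aeval v f), w ^ q = w →
      evalAt w v h (ofPair f n (G, H)) = 0)
    (hu : u ^ q = u) (hun : (u : S) ^ 2 ≠ algebraMap k S n) : aeval v G = 0 ∧ aeval v H = 0 := by
  have huu : (u : S) * ↑u⁻¹ = 1 := Units.mul_inv u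
  -- The conjugate point `(n / u, v)` lies on the curve too, and there `G(y) x + H(y)` vanishes.
  set w : Sˣ := Units.map (algebraMap k S : k →* S) n * u⁻¹ with hw
  have hwval : (w : S) = algebraMap k S n * ↑u⁻¹ := rfl
  have hwinv : algebraMap k S n * ↑w⁻¹ = u := by
    rw [Units.mul_inv_eq_iff_eq_mul, hwval]
    linear_combination -algebraMap k S n * huu
  have hwq : w ^ q = w := by rw [hw, mul_pow, ← map_pow, inv_pow, hn, hu]
  have h₁ := hvan u hpt hu
  have h₂ := hvan w (by rw [hwinv, hwval, add_comm, hpt]) hwq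
  rw [evalAt_ofPair] at h₁ h₂
  have hsub : aeval v G * (u - w) = 0 := by linear_combination h₁ - h₂
  have hne : (u : S) - w ≠ 0 := fun h0 ↦ hun <| by
    rw [hwval] at h0
    linear_combination (u : S) * h0 + algebraMap k S n * huu
  have hG : aeval v G = 0 := (mul_eq_zero.mp hsub).resolve_right hne
  exact ⟨hG, by simpa [hG] using h₁⟩

end Points

section Stepanov

variable {p : ℕ} [hp : Fact p.Prime]

theorem natDegree_X_pow_sub_X : (X ^ p - X : (ZMod p)[X]).natDegree = p :=
  FiniteField.X_pow_card_sub_X_natDegree_eq _ hp.out.one_lt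

theorem monic_X_pow_sub_X : (X ^ p - X : (ZMod p)[X]).Monic :=
  monic_X_pow_sub (degree_X.trans_lt (mod_cast hp.out.one_lt))

variable (n : (ZMod p)ˣ) (A P : ℕ)

/-- Stepanov's auxiliary function: a combination of the products `h * g ^ P`, with `h` and `g`
running over the monomials `y ^ (i % p) x ^ (i / p - B)` of weight `i - p B`, where `B = A` for `h`
and `B = A + 2` for `g`. -/
noncomputable def auxFunction (c : Fin P × Fin (p * (2 * A + 5)) → ZMod p) :
    KloostermanRing (X ^ p - X : (ZMod p)[X]) n :=
  ∑ i, c i • (y _ n ^ (i.1 % p + P * (i.2 % p)) *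
    (x _ n ^ ((i.1 / p : ℕ) - A + P * ((i.2 / p : ℕ) - (A + 2 : ℕ)) : ℤ)).val)

/-- The function that agrees with `auxFunction n A P c ^ P` at every point of the curve which
satisfies `x ^ P ^ 2 = x` and `y ^ P ^ 2 = y + t`. -/
noncomputable def auxFunctionPow (t : ZMod p) (c : Fin P × Fin (p * (2 * A + 5)) → ZMod p) :
    KloostermanRing (X ^ p - X : (ZMod p)[X]) n :=
  ∑ i, c i • (aeval (y _ n) (X ^ (i.1 % p * P) * (X + C t) ^ (i.2 % p)) *
    (x _ n ^ (((i.1 / p : ℕ) - A) * P + ((i.2 / p : ℕ) - (A + 2 : ℕ)) : ℤ)).val)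

variable {n A P}

theorem natAbs_div_sub_le {d i B : ℕ} (hi : i < d * (2 * B + 1)) :
    ((i / d : ℕ) - B : ℤ).natAbs ≤ B := by
  have hdiv := Nat.div_lt_of_lt_mul hi
  generalize i / d = j at hdiv ⊢
  omega

theorem auxFunction_ne_zero {c : Fin P × Fin (p * (2 * A + 5)) → ZMod p} (hc : c ≠ 0) :
    auxFunction n A P c ≠ 0 := by
  refine sum_smul_y_pow_mul_x_zpow_ne_zero monic_X_pow_sub_X
    (by rw [natDegree_X_pow_sub_X]; exact hp.out.ne_zero) hc fun i j hij ↦ ?_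
  have hweight (i : Fin P × Fin (p * (2 * A + 5))) :
      ((i.1 % p + P * (i.2 % p) : ℕ) : ℤ) +
        p * ((i.1 / p : ℕ) - A + P * ((i.2 / p : ℕ) - (A + 2 : ℕ))) =
      (i.1 + P * i.2 : ℕ) - (p * (A + P * (A + 2)) : ℕ) := by
    have h₁ : ((i.1 % p : ℕ) : ℤ) + p * (i.1 / p : ℕ) = i.1 := mod_cast Nat.mod_add_div _ _
    have h₂ : ((i.2 % p : ℕ) : ℤ) + p * (i.2 / p : ℕ) = i.2 := mod_cast Nat.mod_add_div _ _
    push_cast at h₁ h₂ ⊢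
    linear_combination h₁ + P * h₂
  simp only [natDegree_X_pow_sub_X, hweight, sub_left_inj, Nat.cast_inj] at hij
  have h₁ : i.1 = j.1 := Fin.ext <| by
    simpa [Nat.mod_eq_of_lt i.1.2, Nat.mod_eq_of_lt j.1.2] using congrArg (· % P) hij
  have h₂ : i.2 = j.2 := Fin.ext <| by
    rw [h₁] at hij
    exact Nat.eq_of_mul_eq_mul_left (Fin.pos i.1) (Nat.add_left_cancel hij)
  exact Prod.ext h₁ h₂

theorem auxFunction_mem_degreeLTPart (hP : P = p * (2 * A + 1))
    (c : Fin P × Fin (p * (2 * A + 5)) → ZMod p) :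
    auxFunction n A P c ∈
      degreeLTPart (X ^ p - X) n (p + P * p + p * (A + P * (A + 2))) := by
  refine sum_mem fun i _ ↦ Submodule.smul_mem _ _ ?_
  rw [← aeval_X_pow (R := ZMod p) (y _ n)]
  refine aeval_y_mul_x_zpow_mem_degreeLTPart (k := ZMod p) ?_
  rw [natDegree_X_pow, natDegree_X_pow_sub_X]
  have hb : ((i.1 / p : ℕ) - A + P * ((i.2 / p : ℕ) - (A + 2 : ℕ)) : ℤ).natAbs ≤
      A + P * (A + 2) := by
    refine (Int.natAbs_add_le _ _).trans (add_le_add ?_ ?_)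
    · exact natAbs_div_sub_le (i.1.2.trans_eq hP)
    · rw [Int.natAbs_mul, Int.natAbs_natCast]
      exact Nat.mul_le_mul_left _ (natAbs_div_sub_le i.2.2)
  have h₁ : i.1 % p < p := Nat.mod_lt _ hp.out.pos
  have h₂ : P * (i.2 % p) ≤ P * p := Nat.mul_le_mul_left _ (Nat.mod_lt _ hp.out.pos).le
  have h₃ := Nat.mul_le_mul_left p hb
  omega

theorem exists_auxFunctionPow_eq_zero (hp3 : 3 ≤ p) (hP : P = p * (2 * A + 1)) (t : ZMod p) :
    ∃ c : Fin P × Fin (p * (2 * A + 5)) → ZMod p, c ≠ 0 ∧ auxFunctionPow n A P t c = 0 := by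
  refine exists_ne_zero_sum_smul_eq_zero
    (W := degreeLTPart (X ^ p - X) n (p * P + p + p * (A * P + (A + 2)))) (fun i ↦ ?_) ?_
  · refine aeval_y_mul_x_zpow_mem_degreeLTPart ?_
    rw [natDegree_X_pow_sub_X]
    have hb : (((i.1 / p : ℕ) - A) * P + ((i.2 / p : ℕ) - (A + 2 : ℕ)) : ℤ).natAbs ≤
        A * P + (A + 2) := by
      refine (Int.natAbs_add_le _ _).trans (add_le_add ?_ (natAbs_div_sub_le i.2.2))
      rw [Int.natAbs_mul, Int.natAbs_natCast]
      exact Nat.mul_le_mul_right _ (natAbs_div_sub_le (i.1.2.trans_eq hP))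
    have hdeg : (X ^ (i.1 % p * P) * (X + C t) ^ (i.2 % p) : (ZMod p)[X]).natDegree ≤
        i.1 % p * P + i.2 % p := by
      refine natDegree_mul_le.trans (add_le_add (natDegree_X_pow_le _) (natDegree_pow_le.trans ?_))
      rw [natDegree_X_add_C, mul_one]
    have h₁ : i.1 % p * P ≤ p * P := Nat.mul_le_mul_right _ (Nat.mod_lt _ hp.out.pos).le
    have h₂ : i.2 % p < p := Nat.mod_lt _ hp.out.pos
    have h₃ := Nat.mul_le_mul_left p hb
    omega
  · refine (finrank_degreeLTPart_le _ _ _).trans_lt ?_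
    simp only [Fintype.card_prod, Fintype.card_fin]
    have hPA : 3 * (2 * A + 1) ≤ P := hP ▸ Nat.mul_le_mul_right _ hp3
    nlinarith [Nat.mul_le_mul_left p hPA]

theorem evalAt_auxFunction_pow {μ : ℕ} {S : Type*} [CommRing S] [Algebra (ZMod p) S] {u : Sˣ}
    {v : S} {t : ZMod p}
    (h : u + algebraMap (ZMod p) S n * ↑u⁻¹ = aeval v (X ^ p - X : (ZMod p)[X]))
    (hu : u ^ (p ^ μ) ^ 2 = u) (hv : v ^ (p ^ μ) ^ 2 = v + algebraMap (ZMod p) S t)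
    (c : Fin (p ^ μ) × Fin (p * (2 * A + 5)) → ZMod p) :
    evalAt u v h (auxFunction n A (p ^ μ) c) ^ p ^ μ =
      evalAt u v h (auxFunctionPow n A (p ^ μ) t c) := by
  rcases subsingleton_or_nontrivial S with _ | _
  · exact Subsingleton.elim _ _
  have : CharP S p := charP_of_injective_algebraMap (algebraMap (ZMod p) S).injective p
  simp only [auxFunction, auxFunctionPow, map_sum, sum_pow_char_pow]
  refine Finset.sum_congr rfl fun i _ ↦ ?_
  have hx (a b : ℤ) :
      (u ^ (a + (p ^ μ : ℕ) * b)).val ^ p ^ μ = (u ^ (a * (p ^ μ : ℕ) + b)).val := by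
    rw [← Units.val_pow_eq_pow_val, ← zpow_natCast, ← zpow_mul, add_mul, zpow_add, zpow_add,
      mul_right_comm, ← Nat.cast_mul, ← sq, zpow_mul u _ b, zpow_natCast u (_ ^ 2), hu]
  have hy (a b : ℕ) : (v ^ (a + p ^ μ * b)) ^ p ^ μ =
      v ^ (a * p ^ μ) * (v + algebraMap (ZMod p) S t) ^ b := by
    rw [← hv]
    ring
  simp only [map_smul, map_mul (evalAt u v h), map_pow (evalAt u v h), evalAt_y, evalAt_x_zpow,
    evalAt_aeval_y, _root_.smul_pow, mul_pow, ZMod.pow_card_pow, hx, hy]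
  simp only [map_mul, map_pow, map_add, aeval_X, aeval_C]

theorem exists_forall_evalAt_eq_zero (hp2 : p ≠ 2) (n : (ZMod p)ˣ) (t : ZMod p) {μ : ℕ}
    (hμ : μ ≠ 0) (S : Type*) [CommRing S] [IsDomain S] [Algebra (ZMod p) S] :
    ∃ F : KloostermanRing (X ^ p - X : (ZMod p)[X]) n, F ≠ 0 ∧
      (∃ D, F ∈ degreeLTPart (X ^ p - X) n D ∧ 2 * D ≤ (p ^ μ) ^ 2 + 8 * p * p ^ μ) ∧
      ∀ (u : Sˣ) (v : S)
        (h : u + algebraMap (ZMod p) S n * ↑u⁻¹ = aeval v (X ^ p - X : (ZMod p)[X])),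
        u ^ (p ^ μ) ^ 2 = u → v ^ (p ^ μ) ^ 2 = v + algebraMap (ZMod p) S t →
          evalAt u v h F = 0 := by
  obtain ⟨A, hA⟩ : Odd (p ^ (μ - 1)) := (hp.out.odd_of_ne_two hp2).pow
  have hPA : p ^ μ = p * (2 * A + 1) := by rw [← hA, mul_pow_sub_one hμ]
  have hp3 : 3 ≤ p := hp.out.two_le.lt_of_ne' hp2
  obtain ⟨c, hc, hzero⟩ := exists_auxFunctionPow_eq_zero (n := n) hp3 hPA t
  refine ⟨auxFunction n A (p ^ μ) c, auxFunction_ne_zero hc,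
    ⟨_, auxFunction_mem_degreeLTPart hPA c, ?_⟩, fun u v h hu hv ↦ ?_⟩
  · have hA_le : 3 * (2 * A + 1) ≤ p ^ μ := hPA ▸ Nat.mul_le_mul_right _ hp3
    have hsq : (p ^ μ) ^ 2 = p * p ^ μ * (2 * A + 1) := by
      rw [sq]
      nth_rw 1 [hPA]
      ring
    nlinarith [Nat.mul_le_mul_left p hA_le]
  · refine eq_zero_of_pow_eq_zero (n := p ^ μ) ?_
    rw [evalAt_auxFunction_pow h hu hv, hzero, map_zero]

theorem exists_natDegree_le_forall_aeval_eq_zero (hp2 : p ≠ 2) (n : (ZMod p)ˣ) (t : ZMod p)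
    {μ : ℕ} (hμ : μ ≠ 0) (S : Type*) [CommRing S] [IsDomain S] [Algebra (ZMod p) S] :
    ∃ g : (ZMod p)[X], g ≠ 0 ∧ 2 * g.natDegree ≤ (p ^ μ) ^ 2 + 8 * p * p ^ μ ∧
      ∀ (u : Sˣ) (v : S), (u : S) ^ 2 ≠ algebraMap (ZMod p) S n →
        u + algebraMap (ZMod p) S n * ↑u⁻¹ = v ^ p - v → u ^ (p ^ μ) ^ 2 = u →
        v ^ (p ^ μ) ^ 2 = v + algebraMap (ZMod p) S t → aeval v g = 0 := by
  obtain ⟨F, hF, ⟨D, hFD, hD⟩, hvan⟩ := exists_forall_evalAt_eq_zero hp2 n t hμ S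
  obtain ⟨G, hG, H, hH, rfl⟩ := mem_degreeLTPart.mp hFD
  have hnq : n ^ (p ^ μ) ^ 2 = n :=
    Units.ext (by rw [Units.val_pow_eq_pow_val, ← pow_mul, ZMod.pow_card_pow])
  have hGH (u : Sˣ) (v : S) (hun : (u : S) ^ 2 ≠ algebraMap (ZMod p) S n)
      (h : u + algebraMap (ZMod p) S n * ↑u⁻¹ = v ^ p - v) (hu : u ^ (p ^ μ) ^ 2 = u)
      (hv : v ^ (p ^ μ) ^ 2 = v + algebraMap (ZMod p) S t) : aeval v G = 0 ∧ aeval v H = 0 :=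
    aeval_eq_zero_of_forall_evalAt_eq_zero (f := X ^ p - X) hnq (by simpa using h)
      (fun w hw hwq ↦ hvan w v hw hwq hv) hu hun
  have hdeg {g : (ZMod p)[X]} (hg : g ∈ degreeLT (ZMod p) D) (hg0 : g ≠ 0) :
      2 * g.natDegree ≤ (p ^ μ) ^ 2 + 8 * p * p ^ μ := by
    have := (natDegree_lt_iff_degree_lt hg0).mpr (mem_degreeLT.mp hg)
    omega
  by_cases hG0 : G = 0
  · have hH0 : H ≠ 0 := by
      rintro rfl
      exact hF (by rw [hG0, ← Prod.zero_eq_mk, map_zero])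
    exact ⟨H, hH0, hdeg hH hH0, fun u v h₁ h₂ h₃ h₄ ↦ (hGH u v h₁ h₂ h₃ h₄).2⟩
  · exact ⟨G, hG0, hdeg hG hG0, fun u v h₁ h₂ h₃ h₄ ↦ (hGH u v h₁ h₂ h₃ h₄).1⟩

end Stepanov

end KloostermanRing

open Finset

section Counting

theorem pow_char_pow_eq_add_sum {S : Type*} [CommRing S] {p : ℕ} [hp : Fact p.Prime] [CharP S p]
    (v : S) (r : ℕ) : v ^ p ^ r = v + ∑ i ∈ range r, (v ^ p - v) ^ p ^ i := by
  have hterm (i : ℕ) : (v ^ p - v) ^ p ^ i = v ^ p ^ (i + 1) - v ^ p ^ i := by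
    rw [sub_pow_char_pow, ← pow_mul, ← pow_succ']
  rw [sum_congr rfl fun i _ ↦ hterm i, sum_range_sub (fun i ↦ v ^ p ^ i), pow_zero, pow_one,
    add_sub_cancel]

theorem card_roots_artinSchreier {L : Type*} [Field L] [IsAlgClosed L] [DecidableEq L] (p : ℕ)
    [hp : Fact p.Prime] [CharP L p] (a : L) :
    #(X ^ p - X - C a : L[X]).roots.toFinset = p := by
  have hdeg : (X ^ p - X - C a : L[X]).natDegree = p := by
    rw [sub_sub, natDegree_sub_eq_left_of_natDegree_lt] <;>
      simp [hp.out.one_lt]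
  have hsep : (X ^ p - X - C a : L[X]).Separable := by
    have hder : derivative (X ^ p - X - C a : L[X]) = -1 := by
      simp [derivative_X_pow]
    rw [Separable, hder]
    exact isCoprime_one_right.neg_right
  rw [Multiset.toFinset_card_of_nodup (nodup_roots hsep),
    splits_iff_card_roots.mp (IsAlgClosed.splits _), hdeg]

theorem card_le_two_of_forall_quadratic_eq_zero {R : Type*} [CommRing R] [IsDomain R] {s : Finset R}
    (t m : R) (hs : ∀ x ∈ s, x ^ 2 - t * x + m = 0) : #s ≤ 2 := by
  have hdeg : (X ^ 2 - C t * X + C m).natDegree = 2 := by compute_degree!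
  rw [← hdeg]
  exact card_le_degree_of_subset_roots fun x hx ↦
    (mem_roots (ne_zero_of_natDegree_gt (hdeg ▸ two_pos))).mpr (by simpa using hs x hx)

theorem card_le_two_of_forall_add_mul_inv_eq {R : Type*} [CommRing R] [IsDomain R] (n : R)
    {s : Finset Rˣ} (hs : ∀ u ∈ s, ∀ w ∈ s, (u : R) + n * ↑u⁻¹ = w + n * ↑w⁻¹) : #s ≤ 2 := by
  rcases s.eq_empty_or_nonempty with rfl | ⟨w, hw⟩
  · simp
  rw [← card_map ⟨_, Units.val_injective⟩]
  refine card_le_two_of_forall_quadratic_eq_zero (w + n * ↑w⁻¹) n fun x hx ↦ ?_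
  obtain ⟨u, hu, rfl⟩ := mem_map.mp hx
  simp only [Function.Embedding.coeFn_mk]
  linear_combination (u : R) * hs u hu w hw - n * u.mul_inv

variable {p : ℕ} [hp : Fact p.Prime] {K : Type*} [Field K] [Finite K] [Algebra (ZMod p) K]

theorem pow_card_eq_add_algebraMap_trace {L : Type*} [Field L] [Algebra K L] [Algebra (ZMod p) L]
    [IsScalarTower (ZMod p) K L] {a : K} {v : L} (h : v ^ p - v = algebraMap K L a) :
    v ^ Nat.card K = v + algebraMap (ZMod p) L (Algebra.trace (ZMod p) K a) := by
  have := Fintype.ofFinite K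
  have : CharP L p := charP_of_injective_algebraMap (algebraMap (ZMod p) L).injective p
  rw [Module.natCard_eq_pow_finrank (K := ZMod p) (V := K), Nat.card_zmod,
    pow_char_pow_eq_add_sum, IsScalarTower.algebraMap_apply (ZMod p) K L,
    FiniteField.algebraMap_trace_eq_sum_pow, h, map_sum]
  simp only [map_pow, Nat.card_zmod]

/- Double counting of the pairs `(u, v)` with `v ^ p - v = u + n / u`: each `u` has `p` such `v`,
all of them zeros of Stepanov's polynomial, and each `v` has at most two such `u`. -/
theorem card_mul_le_of_forall_trace_eq (hp2 : p ≠ 2) {μ : ℕ} (hμ : μ ≠ 0)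
    (hK : Nat.card K = (p ^ μ) ^ 2) (n : (ZMod p)ˣ) (t : ZMod p) {Z : Finset Kˣ}
    (hsq : ∀ u ∈ Z, (u : K) ^ 2 ≠ algebraMap (ZMod p) K n)
    (htr : ∀ u ∈ Z, Algebra.trace (ZMod p) K (u + algebraMap (ZMod p) K n * ↑u⁻¹) = t) :
    #Z * p ≤ (p ^ μ) ^ 2 + 8 * p * p ^ μ := by
  classical
  have := Fintype.ofFinite K
  let L := AlgebraicClosure K
  have : CharP L p := charP_of_injective_algebraMap (algebraMap (ZMod p) L).injective p
  have hmap (z : ZMod p) : algebraMap (ZMod p) L z = algebraMap K L (algebraMap (ZMod p) K z) :=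
    IsScalarTower.algebraMap_apply _ _ _ _
  obtain ⟨g, hg0, hgdeg, hg⟩ :=
    KloostermanRing.exists_natDegree_le_forall_aeval_eq_zero hp2 n t hμ L
  have hcount : #Z * p ≤ #(g.aroots L).toFinset * 2 := by
    refine card_mul_le_card_mul (fun (u : Kˣ) (v : L) ↦
      v ^ p - v = algebraMap K L (u + algebraMap (ZMod p) K n * ↑u⁻¹))
      (fun u hu ↦ ?_) fun v _ ↦ card_le_two_of_forall_add_mul_inv_eq _ fun u hu w hw ↦
        (algebraMap K L).injective ((mem_filter.mp hu).2.symm.trans (mem_filter.mp hw).2)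
    refine (card_roots_artinSchreier p
      (algebraMap K L (u + algebraMap (ZMod p) K n * ↑u⁻¹))).ge.trans (card_le_card fun v hv ↦ ?_)
    have hv' : v ^ p - v = algebraMap K L (u + algebraMap (ZMod p) K n * ↑u⁻¹) := by
      have := isRoot_of_mem_roots (Multiset.mem_toFinset.mp hv)
      simpa [sub_eq_zero] using this
    refine (mem_bipartiteAbove _).mpr ⟨?_, hv'⟩
    rw [Multiset.mem_toFinset, mem_aroots]
    refine ⟨hg0, hg (Units.map (algebraMap K L : K →* L) u) v ?_ ?_ ?_ ?_⟩
    · rw [hmap, Units.coe_map, MonoidHom.coe_coe, ← map_pow]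
      exact (algebraMap K L).injective.ne (hsq u hu)
    · rw [hv', hmap, map_add, map_mul, ← map_inv, Units.coe_map, Units.coe_map]
      rfl
    · rw [← map_pow, ← hK, Nat.card_eq_fintype_card]
      exact congrArg _ (Units.ext (by rw [Units.val_pow_eq_pow_val, FiniteField.pow_card]))
    · rw [← hK, pow_card_eq_add_algebraMap_trace hv', htr u hu]
  have hroots : #(g.aroots L).toFinset ≤ g.natDegree :=
    (Multiset.toFinset_card_le _).trans (card_roots_map_le_natDegree g)
  linarith

variable [Fintype Kˣ]

theorem card_units_trace_eq_le (hp2 : p ≠ 2) {μ : ℕ} (hμ : μ ≠ 0) (hK : Nat.card K = (p ^ μ) ^ 2)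
    (n : (ZMod p)ˣ) (t : ZMod p) :
    p * #{u : Kˣ | Algebra.trace (ZMod p) K (u + algebraMap (ZMod p) K n * ↑u⁻¹) = t} ≤
      (p ^ μ) ^ 2 + 10 * p * p ^ μ := by
  classical
  set T : Finset Kˣ := {u | Algebra.trace (ZMod p) K (u + algebraMap (ZMod p) K n * ↑u⁻¹) = t}
  have hcard := card_filter_add_card_filter_not (s := T)
    (fun u ↦ (u : K) ^ 2 ≠ algebraMap (ZMod p) K n)
  have hsq : #(T.filter fun u : Kˣ ↦ ¬ (u : K) ^ 2 ≠ algebraMap (ZMod p) K n) ≤ 2 := by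
    rw [← card_map ⟨_, Units.val_injective⟩]
    refine card_le_two_of_forall_quadratic_eq_zero 0 (-algebraMap (ZMod p) K n) fun x hx ↦ ?_
    obtain ⟨u, hu, rfl⟩ := mem_map.mp hx
    have hun : (u : K) ^ 2 = algebraMap (ZMod p) K n := not_not.mp (mem_filter.mp hu).2
    simp [hun]
  have hnsq := card_mul_le_of_forall_trace_eq hp2 hμ hK n t
    (Z := T.filter fun u : Kˣ ↦ (u : K) ^ 2 ≠ algebraMap (ZMod p) K n)
    (fun u hu ↦ (mem_filter.mp hu).2) fun u hu ↦ (mem_filter.mp (mem_filter.mp hu).1).2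
  have hP : 1 ≤ p ^ μ := Nat.one_le_pow _ _ hp.out.pos
  nlinarith

end Counting

theorem norm_sum_addChar_le_of_card_fiber_le {α F : Type*} [Fintype α] [AddCommGroup F] [Fintype F]
    [DecidableEq F] {ψ : AddChar F ℂ} (hψ : ψ ≠ 1) (τ : α → F) (E : ℕ)
    (h : ∀ c, Fintype.card F * #{a | τ a = c} ≤ Fintype.card α + E) :
    ‖∑ a, ψ (τ a)‖ ≤ 2 * E := by
  have hF : (0 : ℝ) < Fintype.card F := by exact_mod_cast Fintype.card_pos
  let z (c : F) : ℝ := Fintype.card F * #{a | τ a = c} - Fintype.card α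
  have hz (c : F) : z c ≤ E := sub_le_iff_le_add'.mpr (by exact_mod_cast h c)
  have hz0 : ∑ c, z c = 0 := by
    have hcard : (Fintype.card α : ℝ) = ∑ c, (#{a | τ a = c} : ℝ) := by
      exact_mod_cast card_eq_sum_card_fiberwise (s := univ) (t := univ) (f := τ) (by simp)
    simp [z, ← mul_sum, ← hcard]
  have hsum : Fintype.card F * ∑ a, ψ (τ a) = ∑ c, (z c : ℂ) * ψ c := by
    have hfib (c : F) : ∑ a with τ a = c, ψ (τ a) = #{a | τ a = c} * ψ c := by
      rw [sum_congr rfl fun a ha ↦ by rw [(mem_filter.mp ha).2], sum_const, nsmul_eq_mul]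
    rw [← sum_fiberwise univ τ, sum_congr rfl fun c _ ↦ hfib c]
    simp only [z, Complex.ofReal_sub, Complex.ofReal_mul, Complex.ofReal_natCast, sub_mul,
      sum_sub_distrib, ← mul_sum, AddChar.sum_eq_zero_of_ne_one hψ, mul_zero, sub_zero, mul_assoc]
  refine le_of_mul_le_mul_left ?_ hF
  calc Fintype.card F * ‖∑ a, ψ (τ a)‖ = ‖∑ c, (z c : ℂ) * ψ c‖ := by
        rw [← hsum, norm_mul, Complex.norm_natCast]
    _ ≤ ∑ c, ‖(z c : ℂ) * ψ c‖ := norm_sum_le _ _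
    _ = ∑ c, |z c| := by simp
    _ ≤ ∑ c, (2 * E - z c) := by
        gcongr with c
        exact abs_le.mpr ⟨by linarith [hz c, E.cast_nonneg (α := ℝ)], by linarith [hz c]⟩
    _ = Fintype.card F * (2 * E) := by simp [hz0]

/-- The Kloosterman sum `∑ ψ (m u + n / u)` over the units `u` of `R`. The `finsum` makes it
available without a choice of `Fintype Rˣ`; it is only meaningful when `Rˣ` is finite. -/
noncomputable def kloostermanSum {R : Type*} [CommRing R] (ψ : AddChar R ℂ) (m n : R) : ℂ :=
  ∑ᶠ u : Rˣ, ψ (m * u + n * ↑u⁻¹)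

theorem kloostermanSum_eq_sum {R : Type*} [CommRing R] [Fintype Rˣ] (ψ : AddChar R ℂ) (m n : R) :
    kloostermanSum ψ m n = ∑ u : Rˣ, ψ (m * u + n * ↑u⁻¹) :=
  finsum_eq_sum_of_fintype _

/-- The additive character `ψ ∘ Tr` of an algebra `K` over `k`. -/
noncomputable def traceChar {k : Type*} [CommRing k] (ψ : AddChar k ℂ) (K : Type*) [CommRing K]
    [Algebra k K] : AddChar K ℂ :=
  ψ.compAddMonoidHom (Algebra.trace k K).toAddMonoidHom

theorem traceChar_apply {k K : Type*} [CommRing k] [CommRing K] [Algebra k K] (ψ : AddChar k ℂ)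
    (a : K) : traceChar ψ K a = ψ (Algebra.trace k K a) :=
  rfl

theorem norm_kloostermanSum_traceChar_le {p : ℕ} [hp : Fact p.Prime] (hp2 : p ≠ 2) {K : Type*}
    [Field K] [Finite K] [Algebra (ZMod p) K] {μ : ℕ} (hμ : μ ≠ 0)
    (hK : Nat.card K = (p ^ μ) ^ 2) (n : (ZMod p)ˣ) {ψ : AddChar (ZMod p) ℂ} (hψ : ψ ≠ 1) :
    ‖kloostermanSum (traceChar ψ K) 1 (algebraMap (ZMod p) K n)‖ ≤ 22 * p * p ^ μ := by
  have := Fintype.ofFinite Kˣ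
  have hunits : Fintype.card Kˣ = (p ^ μ) ^ 2 - 1 := by
    rw [← Nat.card_eq_fintype_card, Nat.card_units, hK]
  rw [kloostermanSum_eq_sum]
  simp only [traceChar_apply, one_mul]
  calc _ ≤ 2 * ((11 * p * p ^ μ : ℕ) : ℝ) :=
        norm_sum_addChar_le_of_card_fiber_le hψ
          (fun u : Kˣ ↦ Algebra.trace (ZMod p) K (u + algebraMap (ZMod p) K n * ↑u⁻¹)) _ fun t ↦ by
            have hcount := card_units_trace_eq_le hp2 hμ hK n t
            have hpos : 1 ≤ p * p ^ μ := Nat.mul_pos hp.out.pos (Nat.pow_pos hp.out.pos)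
            rw [ZMod.card, hunits]
            lia
    _ = 22 * p * p ^ μ := by push_cast; ring

/- The elements `b ^ 2` and `d * b ^ 2` together cover each element of `k` exactly twice. -/
theorem sum_comp_sq_add_sum_comp_mul_sq {k : Type*} [Field k] [Fintype k] (h2 : ringChar k ≠ 2)
    {d : k} (hd : ¬ IsSquare d) {A : Type*} [CommRing A] (g : k → A) :
    ∑ b, g (b ^ 2) + ∑ b, g (d * b ^ 2) = 2 * ∑ D, g D := by
  classical
  have hd0 : d ≠ 0 := fun h ↦ hd (h ▸ IsSquare.zero)
  have hsq (D : k) : (#{b : k | b ^ 2 = D} : ℤ) = quadraticChar k D + 1 := by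
    rw [← quadraticChar_card_sqrts h2]
    congr 2
    ext
    simp
  have hmulsq (D : k) : (#{b : k | d * b ^ 2 = D} : ℤ) = -quadraticChar k D + 1 := by
    have hD : quadraticChar k D = -quadraticChar k (D / d) := by
      rw [← neg_one_mul, ← quadraticChar_neg_one_iff_not_isSquare.mpr hd, ← map_mul,
        mul_div_cancel₀ _ hd0]
    rw [hD, neg_neg, ← hsq]
    congr 2
    ext b
    rw [mem_filter_univ, mem_filter_univ, eq_div_iff hd0, mul_comm]
  have hsum (f : k → k) : ∑ b, g (f b) = ∑ D, (#{b | f b = D} : A) * g D := by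
    rw [← sum_fiberwise univ f]
    refine sum_congr rfl fun D _ ↦ ?_
    rw [sum_congr rfl fun b hb ↦ by rw [(mem_filter.mp hb).2], sum_const, nsmul_eq_mul]
  rw [hsum, hsum, ← sum_add_distrib, mul_sum]
  refine sum_congr rfl fun D _ ↦ ?_
  have hcard : (#{b : k | b ^ 2 = D} + #{b : k | d * b ^ 2 = D} : ℤ) = 2 := by
    rw [hsq, hmulsq]
    ring
  rw [← add_mul]
  exact congrArg (· * g D) (by exact_mod_cast congrArg (Int.cast : ℤ → A) hcard)

theorem trace_quadraticAlgebra {R : Type*} [CommRing R] {a b : R} (z : QuadraticAlgebra R a b) :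
    Algebra.trace R (QuadraticAlgebra R a b) z = QuadraticAlgebra.trace z := by
  have hbasis (i : Fin 2) : (QuadraticAlgebra.basis a b) i = ![⟨1, 0⟩, ⟨0, 1⟩] i := by
    rw [← (QuadraticAlgebra.basis a b).repr_symm_single_one, LinearEquiv.symm_apply_eq]
    ext j
    fin_cases i <;> fin_cases j <;> simp
  have hdiag (i : Fin 2) : Algebra.leftMulMatrix (QuadraticAlgebra.basis a b) z i i =
      ![z.re, z.re + b * z.im] i := by
    fin_cases i <;> simp [Algebra.leftMulMatrix_apply, LinearMap.toMatrix_apply, hbasis]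
  rw [Algebra.trace_eq_matrix_trace (QuadraticAlgebra.basis a b), Matrix.trace, Fin.sum_univ_two,
    Matrix.diag_apply, Matrix.diag_apply, hdiag, hdiag, QuadraticAlgebra.trace_def, two_mul,
    add_assoc]
  rfl

section QuadraticExtension

variable {k : Type*} [Field k] [Fintype k] [DecidableEq k]

theorem kloostermanSum_eq_sum_ite (ψ : AddChar k ℂ) (m n : k) :
    kloostermanSum ψ m n = ∑ x : k, if x = 0 then 0 else ψ (m * x + n * x⁻¹) := by
  rw [kloostermanSum_eq_sum, sum_ite, sum_const_zero, zero_add,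
    sum_subtype (univ.filter fun x : k ↦ ¬ x = 0) (p := (· ≠ 0)) (by simp)]
  exact Fintype.sum_equiv unitsEquivNeZero _ _ fun u ↦ by simp

/-- The Kloosterman sum `∑ φ (Tr (z + n / z))` of the algebra `k[√d]`, in the coordinates
`z = a + b √d`, for which `Tr z = 2 a` and `Tr z⁻¹ = 2 a / (a² - d b²)`. The case `d = 1` is the
split algebra `k × k`. -/
noncomputable def normFormSum (φ : AddChar k ℂ) (n d : k) : ℂ :=
  ∑ a : k, ∑ b : k, if a ^ 2 - d * b ^ 2 = 0 then 0 else
    φ (2 * a + 2 * a * n / (a ^ 2 - d * b ^ 2))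

theorem normFormSum_one (h2 : ringChar k ≠ 2) (φ : AddChar k ℂ) (n : k) :
    normFormSum φ n 1 = kloostermanSum φ 1 n ^ 2 := by
  have h20 : (2 : k) ≠ 0 := Ring.two_ne_zero h2
  rw [kloostermanSum_eq_sum_ite, normFormSum, pow_two, sum_mul_sum, ← Fintype.sum_prod_type',
    ← Fintype.sum_prod_type']
  refine Fintype.sum_equiv ⟨fun z ↦ (z.1 + z.2, z.1 - z.2),
    fun z ↦ ((z.1 + z.2) / 2, (z.1 - z.2) / 2), fun z ↦ ?_, fun z ↦ ?_⟩ _ _ fun ⟨a, b⟩ ↦ ?_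
  · ext <;> field_simp <;> ring
  · ext <;> field_simp <;> ring
  have hab : a ^ 2 - 1 * b ^ 2 = (a + b) * (a - b) := by ring
  simp only [Equiv.coe_fn_mk, hab, mul_eq_zero]
  by_cases hadd : a + b = 0
  · simp [hadd]
  by_cases hsub : a - b = 0
  · simp [hsub]
  rw [if_neg (by tauto), if_neg hadd, if_neg hsub, ← AddChar.map_add_eq_mul]
  congr 1
  field_simp
  ring

theorem normFormSum_one_add_normFormSum (h2 : ringChar k ≠ 2) {d n : k} (hd : ¬ IsSquare d)
    (hn : n ≠ 0) {φ : AddChar k ℂ} (hφ : φ ≠ 1) :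
    normFormSum φ n 1 + normFormSum φ n d = 2 * Fintype.card k := by
  have hinner (a : k) :
      (∑ b : k, if a ^ 2 - 1 * b ^ 2 = 0 then 0 else φ (2 * a + 2 * a * n / (a ^ 2 - 1 * b ^ 2))) +
      (∑ b : k, if a ^ 2 - d * b ^ 2 = 0 then 0 else φ (2 * a + 2 * a * n / (a ^ 2 - d * b ^ 2))) =
        2 * ∑ N : k, if N = 0 then 0 else φ (a * (2 * (1 + n / N))) := by
    simp only [one_mul]
    rw [sum_comp_sq_add_sum_comp_mul_sq h2 hd
      (fun D ↦ if a ^ 2 - D = 0 then 0 else φ (2 * a + 2 * a * n / (a ^ 2 - D)))]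
    congr 1
    refine Fintype.sum_equiv (Equiv.subLeft (a ^ 2)) _ _ fun D ↦ ?_
    rw [Equiv.subLeft_apply, show a * (2 * (1 + n / (a ^ 2 - D))) =
      2 * a + 2 * a * n / (a ^ 2 - D) by ring]
  have houter (N : k) : (∑ a : k, if N = 0 then 0 else φ (a * (2 * (1 + n / N)))) =
      if N = -n then (Fintype.card k : ℂ) else 0 := by
    rcases eq_or_ne N 0 with rfl | hN
    · simp [eq_comm, hn]
    have hzero : 2 * (1 + n / N) = 0 ↔ N = -n := by
      rw [mul_eq_zero, or_iff_right (Ring.two_ne_zero h2), one_add_div hN, div_eq_zero_iff,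
        or_iff_left hN, add_eq_zero_iff_eq_neg]
    simp only [hN, if_false]
    rw [AddChar.sum_mulShift _ (AddChar.IsPrimitive.of_ne_one hφ)]
    simp only [hzero, Nat.cast_ite, Nat.cast_zero]
  rw [normFormSum, normFormSum, ← sum_add_distrib, sum_congr rfl fun a _ ↦ hinner a, ← mul_sum,
    sum_comm, sum_congr rfl fun N _ ↦ houter N, sum_ite_eq' univ, if_pos (mem_univ _)]

theorem kloostermanSum_traceChar_quadraticAlgebra (φ : AddChar k ℂ) (n d : k)
    [Fact (∀ r : k, r ^ 2 ≠ d + 0 * r)] :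
    kloostermanSum (traceChar φ (QuadraticAlgebra k d 0)) 1 (algebraMap k _ n) =
      normFormSum φ n d := by
  classical
  let _ : Fintype (QuadraticAlgebra k d 0) :=
    Fintype.ofEquiv _ (QuadraticAlgebra.equivProd d 0).symm
  rw [kloostermanSum_eq_sum_ite, normFormSum, ← Fintype.sum_prod_type']
  refine Fintype.sum_equiv (QuadraticAlgebra.equivProd d 0) _ _ fun z ↦ ?_
  have hz : z = 0 ↔ z.re ^ 2 - d * z.im ^ 2 = 0 := by
    rw [← QuadraticAlgebra.norm_eq_zero_iff_eq_zero, QuadraticAlgebra.norm_def]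
    ring_nf
  have hz1 : QuadraticAlgebra.equivProd d 0 z = (z.re, z.im) := rfl
  simp only [hz1, hz]
  split_ifs with h
  · rfl
  have htrace (w : QuadraticAlgebra k d 0) : QuadraticAlgebra.trace w = 2 * w.re := by
    simp [QuadraticAlgebra.trace_def]
  rw [traceChar_apply, trace_quadraticAlgebra, ← Algebra.smul_def, one_mul, map_add, map_smul,
    htrace, htrace]
  simp only [QuadraticAlgebra.norm_def, QuadraticAlgebra.re_inv, smul_eq_mul]
  congr 1
  field_simp
  ring

end QuadraticExtension

section Transport

variable {k : Type*} [CommRing k] {K : Type*} [CommRing K] [Algebra k K]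

theorem traceChar_self (ψ : AddChar k ℂ) : traceChar ψ k = ψ := by
  ext a
  rw [traceChar_apply, Algebra.trace_self_apply]

theorem kloostermanSum_traceChar_algEquiv {K' : Type*} [CommRing K'] [Algebra k K']
    (ψ : AddChar k ℂ) (σ : K ≃ₐ[k] K') (m n : K) :
    kloostermanSum (traceChar ψ K') (σ m) (σ n) = kloostermanSum (traceChar ψ K) m n := by
  refine (finsum_eq_of_bijective (Units.mapEquiv (σ : K ≃* K')) (Equiv.bijective _) fun u ↦ ?_).symm
  rw [traceChar_apply, traceChar_apply, ← Algebra.trace_eq_of_algEquiv σ]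
  rw [map_add, map_mul, map_mul]
  rfl

end Transport

theorem traceChar_ne_one {k K : Type*} [Field k] [Field K] [Algebra k K] [FiniteDimensional k K]
    [Algebra.IsSeparable k K] {ψ : AddChar k ℂ} (hψ : ψ ≠ 1) : traceChar ψ K ≠ 1 := by
  intro h
  refine hψ (AddChar.ext _ _ fun x ↦ ?_)
  obtain ⟨a, rfl⟩ := Algebra.trace_surjective k K x
  rw [← traceChar_apply, h, AddChar.one_apply, AddChar.one_apply]

theorem traceChar_traceChar {k L K : Type*} [Field k] [Field L] [CommRing K] [Algebra k L]
    [Algebra L K] [Algebra k K] [IsScalarTower k L K] [FiniteDimensional k L]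
    [Module.Finite L K] (ψ : AddChar k ℂ) :
    traceChar (traceChar ψ L) K = traceChar ψ K := by
  ext a
  rw [traceChar_apply, traceChar_apply, traceChar_apply, Algebra.trace_trace]

theorem kloostermanSum_units_left {R : Type*} [CommRing R] (ψ : AddChar R ℂ) (m : Rˣ) (n : R) :
    kloostermanSum ψ m n = kloostermanSum ψ 1 (m * n) :=
  finsum_eq_of_bijective (m * ·) (Group.mulLeft_bijective m) fun u ↦ by
    rw [mul_inv, Units.val_mul, Units.val_mul, one_mul, mul_mul_mul_comm, Units.mul_inv, one_mul]

section Tower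

variable {p : ℕ} [hp : Fact p.Prime]

theorem kloostermanSum_traceChar_of_card_eq_sq (hp2 : p ≠ 2) {k K : Type*} [Field k] [Finite k]
    [Algebra (ZMod p) k] [Field K] [Finite K] [Algebra (ZMod p) K]
    (hK : Nat.card K = Nat.card k ^ 2) (n : (ZMod p)ˣ) {ψ : AddChar (ZMod p) ℂ} (hψ : ψ ≠ 1) :
    kloostermanSum (traceChar ψ K) 1 (algebraMap (ZMod p) K n) =
      2 * Nat.card k - kloostermanSum (traceChar ψ k) 1 (algebraMap (ZMod p) k n) ^ 2 := by
  classical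
  have := Fintype.ofFinite k
  have := Fintype.ofFinite K
  have : CharP k p := charP_of_injective_algebraMap (algebraMap (ZMod p) k).injective p
  have h2 : ringChar k ≠ 2 := by rwa [ringChar.eq k p]
  obtain ⟨d, hd⟩ := FiniteField.exists_nonsquare h2
  have : Fact (∀ r : k, r ^ 2 ≠ d + 0 * r) := ⟨fun r h ↦ hd ⟨r, by linear_combination -h⟩⟩
  let _ : Fintype (QuadraticAlgebra k d 0) :=
    Fintype.ofEquiv _ (QuadraticAlgebra.equivProd d 0).symm
  have hcard : Fintype.card (QuadraticAlgebra k d 0) = Fintype.card K := by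
    rw [Fintype.card_congr (QuadraticAlgebra.equivProd d 0), Fintype.card_prod, ← pow_two,
      ← Nat.card_eq_fintype_card, ← Nat.card_eq_fintype_card, hK]
  have hn : algebraMap (ZMod p) k n ≠ 0 := by simp
  have hsum := normFormSum_one_add_normFormSum h2 hd hn (traceChar_ne_one (K := k) hψ)
  rw [normFormSum_one h2, ← kloostermanSum_traceChar_quadraticAlgebra, traceChar_traceChar,
    ← IsScalarTower.algebraMap_apply,
    ← kloostermanSum_traceChar_algEquiv ψ (FiniteField.algEquivOfCardEq p hcard), map_one,
    AlgEquiv.commutes, ← Nat.card_eq_fintype_card] at hsum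
  linear_combination hsum

theorem norm_le_two_of_orbit_bounded {t : ℕ → ℂ} (ht : ∀ j, t (j + 1) = 2 - t j ^ 2) {B : ℝ}
    (hB : ∀ j, ‖t (j + 1)‖ ≤ B) : ‖t 0‖ ≤ 2 := by
  by_contra! hlt
  set δ := ‖t 0‖ - 2
  have hδ : 0 < δ := sub_pos.mpr hlt
  have hgrowth (j : ℕ) : 2 + 4 ^ j * δ ≤ ‖t j‖ := by
    induction j with
    | zero => simp [δ]
    | succ j ih =>
      have hstep : ‖t j‖ ^ 2 - 2 ≤ ‖t (j + 1)‖ := by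
        have h := norm_sub_norm_le (t j ^ 2) 2
        rwa [norm_pow, norm_sub_rev, ← ht, Complex.norm_ofNat] at h
      have hpos : 0 < 4 ^ j * δ := by positivity
      rw [pow_succ]
      nlinarith
  obtain ⟨j, hj⟩ := pow_unbounded_of_one_lt (B / δ) (by norm_num : (1 : ℝ) < 4)
  have hj' : B < 4 ^ (j + 1) * δ := by
    rw [div_lt_iff₀ hδ] at hj
    exact hj.trans_le (by gcongr <;> simp)
  linarith [hgrowth (j + 1), hB j]

theorem norm_kloostermanSum_one_le (hp2 : p ≠ 2) (n : (ZMod p)ˣ) {ψ : AddChar (ZMod p) ℂ}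
    (hψ : ψ ≠ 1) : ‖kloostermanSum ψ 1 n‖ ≤ 2 * √p := by
  have hp0 : (0 : ℝ) < √p := Real.sqrt_pos.mpr (by exact_mod_cast hp.out.pos)
  let S (j : ℕ) : ℂ := kloostermanSum (traceChar ψ (GaloisField p (2 ^ j))) 1
    (algebraMap (ZMod p) _ n)
  have hcard (j : ℕ) : Nat.card (GaloisField p (2 ^ j)) = p ^ 2 ^ j :=
    GaloisField.card p _ (by positivity)
  have hsqrt (j : ℕ) : √p ^ 2 ^ (j + 1) = p ^ 2 ^ j := by
    rw [pow_succ', pow_mul, Real.sq_sqrt p.cast_nonneg]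
  have hsqrtC (j : ℕ) : (√p : ℂ) ^ 2 ^ (j + 1) = p ^ 2 ^ j := by exact_mod_cast hsqrt j
  have hS0 : S 0 = kloostermanSum ψ 1 n := by
    have h := kloostermanSum_traceChar_algEquiv ψ (GaloisField.equivZmodP p) 1
      (algebraMap (ZMod p) _ n)
    rw [map_one, AlgEquiv.commutes, traceChar_self] at h
    exact h.symm
  have horbit (j : ℕ) : S (j + 1) / (√p : ℂ) ^ 2 ^ (j + 1) = 2 - (S j / (√p : ℂ) ^ 2 ^ j) ^ 2 := by
    have hp0' : (p : ℂ) ≠ 0 := by exact_mod_cast hp.out.ne_zero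
    have hrel : S (j + 1) = 2 * p ^ 2 ^ j - S j ^ 2 := by
      have h := kloostermanSum_traceChar_of_card_eq_sq hp2 (k := GaloisField p (2 ^ j))
        (K := GaloisField p (2 ^ (j + 1))) (by rw [hcard, hcard, ← pow_mul, ← pow_succ]) n hψ
      rwa [hcard, Nat.cast_pow] at h
    rw [div_pow, ← pow_mul, ← pow_succ, hsqrtC, hrel]
    field_simp
  have hbound (j : ℕ) : ‖S (j + 1) / (√p : ℂ) ^ 2 ^ (j + 1)‖ ≤ 22 * p := by
    rw [hsqrtC, norm_div, norm_pow, Complex.norm_natCast]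
    refine div_le_of_le_mul₀ (by positivity) (by positivity)
      (norm_kloostermanSum_traceChar_le hp2 (by positivity) ?_ n hψ)
    rw [hcard, ← pow_mul, ← pow_succ]
  have h := norm_le_two_of_orbit_bounded (t := fun j ↦ S j / (√p : ℂ) ^ 2 ^ j) horbit hbound
  rwa [pow_zero, pow_one, hS0, norm_div, Complex.norm_of_nonneg hp0.le, div_le_iff₀ hp0] at h

theorem norm_kloostermanSum_zmod_prime_le (hp2 : p ≠ 2) (m n : (ZMod p)ˣ) {ψ : AddChar (ZMod p) ℂ}
    (hψ : ψ ≠ 1) : ‖kloostermanSum ψ m n‖ ≤ 2 * √p := by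
  rw [kloostermanSum_units_left, ← Units.val_mul]
  exact norm_kloostermanSum_one_le hp2 (m * n) hψ

end Tower

theorem card_le_two_mul_of_sub_mem_or_add_mem {A : Type*} [AddGroup A] {s t : Finset A}
    (h : ∀ u ∈ s, ∀ v ∈ s, v - u ∈ t ∨ v + u ∈ t) : #s ≤ 2 * #t := by
  classical
  obtain rfl | ⟨u, hu⟩ := s.eq_empty_or_nonempty
  · simp
  have hsub : s ⊆ t.image (· + u) ∪ t.image (· - u) := fun v hv ↦ mem_union.mpr <|
    (h u hu v hv).imp (fun h ↦ mem_image.mpr ⟨_, h, sub_add_cancel _ _⟩)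
      fun h ↦ mem_image.mpr ⟨_, h, add_sub_cancel_right _ _⟩
  calc #s ≤ #(t.image (· + u)) + #(t.image (· - u)) :=
      (card_le_card hsub).trans (card_union_le _ _)
    _ ≤ #t + #t := add_le_add card_image_le card_image_le
    _ = 2 * #t := (two_mul _).symm

section StationaryPhase

variable {R : Type*} [CommRing R]

theorem kloostermanSum_comm (ψ : AddChar R ℂ) (m n : R) :
    kloostermanSum ψ m n = kloostermanSum ψ n m :=
  finsum_eq_of_bijective _ (Equiv.inv Rˣ).bijective fun u ↦ by
    rw [Equiv.inv_apply, inv_inv, add_comm]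

theorem norm_kloostermanSum_le_card_units [Finite R] [Fintype Rˣ] (ψ : AddChar R ℂ) (m n : R) :
    ‖kloostermanSum ψ m n‖ ≤ Fintype.card Rˣ := by
  rw [kloostermanSum_eq_sum]
  exact (norm_sum_le _ _).trans_eq (by simp)

variable [Fintype R] [DecidableEq R]

/-- The approximate critical points of the phase `f u = m u + n u⁻¹`: the units `u` at which
`u f'(u) = m u - n u⁻¹` is annihilated by `P`. -/
def stationaryUnits (m n P : R) : Finset Rˣ :=
  {u | P * (m * u - n * ↑u⁻¹) = 0}

@[simp]
theorem mem_stationaryUnits {m n P : R} {u : Rˣ} :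
    u ∈ stationaryUnits m n P ↔ P * (m * u - n * ↑u⁻¹) = 0 := by
  simp [stationaryUnits]

theorem kloostermanSum_eq_sum_stationaryUnits {ψ : AddChar R ℂ} (hψ : ψ.IsPrimitive)
    (m n : R) {P : R} (hP : P * P = 0) :
    kloostermanSum ψ m n = ∑ u ∈ stationaryUnits m n P, ψ (m * u + n * ↑u⁻¹) := by
  let shift (t : R) : Rˣ :=
    ⟨1 + P * t, 1 - P * t, by linear_combination -t ^ 2 * hP, by linear_combination -t ^ 2 * hP⟩
  have hval (t : R) : (shift t : R) = 1 + P * t := rfl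
  have hinv (t : R) : (↑(shift t)⁻¹ : R) = 1 - P * t := rfl
  have hshift (t : R) : kloostermanSum ψ m n =
      ∑ u : Rˣ, ψ (m * u + n * ↑u⁻¹) * ψ (t * (P * (m * u - n * ↑u⁻¹))) := by
    rw [kloostermanSum_eq_sum, ← Equiv.sum_comp (Equiv.mulRight (shift t))]
    refine sum_congr rfl fun u _ ↦ ?_
    rw [← AddChar.map_add_eq_mul, Equiv.coe_mulRight, mul_inv_rev, Units.val_mul, Units.val_mul]
    congr 1
    linear_combination m * u * hval t + n * ↑u⁻¹ * hinv t
  refine mul_left_cancel₀ (show (Fintype.card R : ℂ) ≠ 0 by simp) ?_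
  calc (Fintype.card R : ℂ) * kloostermanSum ψ m n
    _ = ∑ _t : R, kloostermanSum ψ m n := by simp
    _ = ∑ u : Rˣ, ψ (m * u + n * ↑u⁻¹) * ∑ t : R, ψ (t * (P * (m * u - n * ↑u⁻¹))) := by
      rw [sum_congr rfl fun t _ ↦ hshift t, sum_comm]
      simp_rw [mul_sum]
    _ = Fintype.card R * ∑ u ∈ stationaryUnits m n P, ψ (m * u + n * ↑u⁻¹) := by
      rw [stationaryUnits, sum_filter, mul_sum]
      refine sum_congr rfl fun u _ ↦ ?_
      rw [AddChar.sum_mulShift _ hψ]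
      split_ifs <;> simp [mul_comm]

theorem norm_kloostermanSum_le_card_stationaryUnits {ψ : AddChar R ℂ} (hψ : ψ.IsPrimitive)
    (m n : R) {P : R} (hP : P * P = 0) :
    ‖kloostermanSum ψ m n‖ ≤ #(stationaryUnits m n P) := by
  rw [kloostermanSum_eq_sum_stationaryUnits hψ m n hP]
  exact (norm_sum_le _ _).trans_eq (by simp)

theorem norm_sq_sum_addChar_quadratic_le {ψ : AddChar R ℂ} (hψ : ψ.IsPrimitive) (a b : R) :
    ‖∑ t : R, ψ (a * t + b * t ^ 2)‖ ^ 2 ≤ Fintype.card R * #{x : R | 2 * b * x = 0} := by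
  set G := ∑ t : R, ψ (a * t + b * t ^ 2) with hG
  have hdiff (y : R) : ∑ t, ψ (a * t + b * t ^ 2) * (starRingEnd ℂ) (ψ (a * y + b * y ^ 2)) =
      ∑ x, ψ (a * x + b * x ^ 2) * ψ (y * (2 * b * x)) := by
    rw [← Equiv.sum_comp (Equiv.addRight y)]
    refine sum_congr rfl fun x _ ↦ ?_
    rw [← AddChar.map_neg_eq_conj, ← AddChar.map_add_eq_mul, ← AddChar.map_add_eq_mul,
      Equiv.coe_addRight]
    ring_nf
  have hsq : G * (starRingEnd ℂ) G =
      ∑ x with 2 * b * x = 0, ψ (a * x + b * x ^ 2) * (Fintype.card R : ℂ) := by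
    rw [hG, map_sum, sum_mul_sum, sum_comm, sum_congr rfl fun y _ ↦ hdiff y, sum_comm, sum_filter]
    refine sum_congr rfl fun x _ ↦ ?_
    rw [← mul_sum, AddChar.sum_mulShift _ hψ, Nat.cast_ite, Nat.cast_zero, mul_ite, mul_zero]
  calc ‖G‖ ^ 2 = ‖G * (starRingEnd ℂ) G‖ := by rw [norm_mul, RCLike.norm_conj, sq]
    _ ≤ ∑ x with 2 * b * x = 0, (Fintype.card R : ℝ) := by
      rw [hsq]
      exact norm_sum_le_of_le _ fun x _ ↦ by simp
    _ = Fintype.card R * #{x : R | 2 * b * x = 0} := by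
      rw [sum_const, nsmul_eq_mul, mul_comm]

/- The stationary units are stable under `u ↦ u (1 + Q t)`; to second order in `Q`, averaging
over `t` turns each of their contributions into a quadratic Gauss sum. -/
theorem card_mul_kloostermanSum_eq_sum_gauss {ψ : AddChar R ℂ} (hψ : ψ.IsPrimitive) (m n : R)
    {P Q : R} (hP : P * P = 0) (hPQ : P * Q = 0) (hQ : Q ^ 3 = 0) :
    Fintype.card R * kloostermanSum ψ m n =
      ∑ u ∈ stationaryUnits m n P, ψ (m * u + n * ↑u⁻¹) *
        ∑ t : R, ψ (Q * (m * u - n * ↑u⁻¹) * t + Q ^ 2 * n * ↑u⁻¹ * t ^ 2) := by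
  let shift (t : R) : Rˣ := ⟨1 + Q * t, 1 - Q * t + Q ^ 2 * t ^ 2,
    by linear_combination t ^ 3 * hQ, by linear_combination t ^ 3 * hQ⟩
  have hval (t : R) : (shift t : R) = 1 + Q * t := rfl
  have hinv (t : R) : (↑(shift t)⁻¹ : R) = 1 - Q * t + Q ^ 2 * t ^ 2 := rfl
  have hshift (t : R) : kloostermanSum ψ m n =
      ∑ u ∈ stationaryUnits m n P, ψ (m * u + n * ↑u⁻¹) *
        ψ (Q * (m * u - n * ↑u⁻¹) * t + Q ^ 2 * n * ↑u⁻¹ * t ^ 2) := by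
    rw [kloostermanSum_eq_sum_stationaryUnits hψ m n hP]
    symm
    refine sum_equiv (Equiv.mulRight (shift t)) (fun u ↦ ?_) fun u _ ↦ ?_
    · rw [mem_stationaryUnits, mem_stationaryUnits, Equiv.coe_mulRight, mul_inv_rev,
        Units.val_mul, Units.val_mul, hval, hinv]
      refine Eq.congr_left ?_
      linear_combination -(m * u * t + n * t * ↑u⁻¹ - n * ↑u⁻¹ * Q * t ^ 2) * hPQ
    · rw [← AddChar.map_add_eq_mul, Equiv.coe_mulRight, mul_inv_rev, Units.val_mul, Units.val_mul,
        hval, hinv]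
      ring_nf
  calc Fintype.card R * kloostermanSum ψ m n = ∑ _t : R, kloostermanSum ψ m n := by simp
    _ = _ := by
      rw [sum_congr rfl fun t _ ↦ hshift t, sum_comm]
      simp_rw [mul_sum]

theorem card_mul_norm_kloostermanSum_le {ψ : AddChar R ℂ} (hψ : ψ.IsPrimitive) (m : R) {n : R}
    (hn : IsUnit n) (h2 : IsUnit (2 : R)) {P Q : R} (hP : P * P = 0) (hPQ : P * Q = 0)
    (hQ : Q ^ 3 = 0) :
    Fintype.card R * ‖kloostermanSum ψ m n‖ ≤
      #(stationaryUnits m n P) * √(Fintype.card R * #{x : R | Q ^ 2 * x = 0}) := by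
  have hgauss (u : Rˣ) : ‖∑ t : R, ψ (Q * (m * u - n * ↑u⁻¹) * t + Q ^ 2 * n * ↑u⁻¹ * t ^ 2)‖ ≤
      √(Fintype.card R * #{x : R | Q ^ 2 * x = 0}) := by
    have hunit : IsUnit (2 * n * ↑u⁻¹ : R) := (h2.mul hn).mul u⁻¹.isUnit
    have hann (x : R) : 2 * (Q ^ 2 * n * ↑u⁻¹) * x = 0 ↔ Q ^ 2 * x = 0 := by
      rw [← hunit.mul_right_eq_zero (b := Q ^ 2 * x)]
      ring_nf
    refine Real.le_sqrt_of_sq_le ((norm_sq_sum_addChar_quadratic_le hψ _ _).trans_eq ?_)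
    simp_rw [hann]
  rw [← Complex.norm_natCast, ← norm_mul, card_mul_kloostermanSum_eq_sum_gauss hψ m n hP hPQ hQ,
    ← nsmul_eq_mul, ← sum_const]
  exact norm_sum_le_of_le _ fun u _ ↦ by simpa using hgauss u

theorem mul_sub_mul_add_eq_zero_of_mem_stationaryUnits {m n P : R} (hm : IsUnit m) {u v : Rˣ}
    (hu : u ∈ stationaryUnits m n P) (hv : v ∈ stationaryUnits m n P) :
    P * ((v - u) * (v + u)) = (0 : R) := by
  rw [mem_stationaryUnits] at hu hv
  refine hm.mul_left_cancel ?_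
  linear_combination (v : R) * hv - (u : R) * hu + P * n * v.mul_inv - P * n * u.mul_inv

theorem card_stationaryUnits_le [IsLocalRing R] (h2 : ∀ u v : Rˣ, (2 : R) ∣ v - u) {m : R}
    (hm : IsUnit m) (n P : R) :
    #(stationaryUnits m n P) ≤ 2 * #{x : R | 2 * P * x = 0} := by
  rw [← card_map ⟨Units.val, Units.val_injective⟩]
  refine card_le_two_mul_of_sub_mem_or_add_mem ?_
  simp only [forall_mem_map, Function.Embedding.coeFn_mk, mem_filter_univ]
  intro u hu v hv
  have hrel := mul_sub_mul_add_eq_zero_of_mem_stationaryUnits hm hu hv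
  obtain ⟨x, hx⟩ := h2 u v
  -- The halves `x + u` and `x` of `v + u` and `v - u` differ by a unit, so one of them is a unit.
  have hsum : IsUnit ((x + u : R) + -x) := by
    rw [add_neg_cancel_comm]
    exact u.isUnit
  refine (IsLocalRing.isUnit_or_isUnit_of_isUnit_add hsum).imp
    (fun h ↦ h.mul_left_cancel ?_) fun h ↦ h.mul_left_cancel ?_
  · linear_combination hrel - P * (v - u) * hx
  · linear_combination -hrel + P * (v + u) * hx

theorem kloostermanSum_eq_zero_of_isUnit_of_not_isUnit {R : Type*} [CommRing R] [Finite R]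
    [IsLocalRing R] {ψ : AddChar R ℂ} (hψ : ψ.IsPrimitive) {m n P : R} (hm : IsUnit m)
    (hn : ¬IsUnit n) (hP : P * P = 0) (hP0 : P ≠ 0) : kloostermanSum ψ m n = 0 := by
  classical
  have := Fintype.ofFinite R
  rw [kloostermanSum_eq_sum_stationaryUnits hψ m n hP]
  refine sum_eq_zero fun u hu ↦ absurd (mem_stationaryUnits.mp hu) ?_
  have hsum : IsUnit (m * u - n * ↑u⁻¹ + n * ↑u⁻¹) := by
    rw [sub_add_cancel]
    exact hm.mul u.isUnit
  have hunit : IsUnit (m * u - n * ↑u⁻¹ : R) :=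
    (IsLocalRing.isUnit_or_isUnit_of_isUnit_add hsum).resolve_right
      fun h ↦ hn (isUnit_of_mul_isUnit_left h)
  rwa [hunit.mul_left_eq_zero]

end StationaryPhase

section PrimePowers

theorem card_mul_eq_zero_zmod_le (N : ℕ) [NeZero N] {a : ℕ} (ha : 0 < a) :
    #{x : ZMod N | (a : ZMod N) * x = 0} ≤ a := by
  simpa only [nsmul_eq_mul] using IsAddCyclic.card_nsmul_eq_zero_le (α := ZMod N) ha

theorem natCast_pow_zmod_pow_eq_zero {p k a : ℕ} (h : k ≤ a) : (p : ZMod (p ^ k)) ^ a = 0 := by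
  exact_mod_cast (ZMod.natCast_eq_zero_iff _ _).mpr (pow_dvd_pow p h)

variable {p : ℕ} [hp : Fact p.Prime]

theorem isUnit_intCast_zmod_prime_pow_iff {k : ℕ} (hk : k ≠ 0) (a : ℤ) :
    IsUnit (a : ZMod (p ^ k)) ↔ ¬(p : ℤ) ∣ a := by
  rw [ZMod.coe_int_isUnit_iff_isCoprime, Nat.cast_pow, IsCoprime.pow_left_iff hk.bot_lt]
  exact (Nat.prime_iff_prime_int.mp hp.out).coprime_iff_not_dvd

theorem isLocalRing_zmod_prime_pow {k : ℕ} (hk : k ≠ 0) : IsLocalRing (ZMod (p ^ k)) := by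
  have : Fact (1 < p ^ k) := ⟨Nat.one_lt_pow hk hp.out.one_lt⟩
  refine IsLocalRing.of_nonunits_add fun x y hx hy ↦ ?_
  obtain ⟨a, rfl⟩ := ZMod.intCast_surjective x
  obtain ⟨b, rfl⟩ := ZMod.intCast_surjective y
  rw [mem_nonunits_iff, isUnit_intCast_zmod_prime_pow_iff hk, not_not] at hx hy
  rw [mem_nonunits_iff, ← Int.cast_add, isUnit_intCast_zmod_prime_pow_iff hk, not_not]
  exact dvd_add hx hy

theorem isUnit_two_zmod_prime_pow (hp2 : p ≠ 2) (k : ℕ) : IsUnit (2 : ZMod (p ^ k)) := by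
  have : Nat.Coprime 2 (p ^ k) :=
    Nat.Coprime.pow_right k ((Nat.coprime_primes Nat.prime_two hp.out).mpr hp2.symm)
  exact_mod_cast (ZMod.isUnit_iff_coprime 2 (p ^ k)).mpr this

theorem two_dvd_units_sub_units_zmod_two_pow {k : ℕ} (hk : k ≠ 0) (u v : (ZMod (2 ^ k))ˣ) :
    (2 : ZMod (2 ^ k)) ∣ v - u := by
  have odd_of_isUnit {a : ℤ} (ha : IsUnit (a : ZMod (2 ^ k))) : Odd a := by
    rw [← Int.not_even_iff_odd, even_iff_two_dvd]
    exact_mod_cast (isUnit_intCast_zmod_prime_pow_iff hk a).mp ha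
  obtain ⟨a, ha⟩ := ZMod.intCast_surjective (u : ZMod (2 ^ k))
  obtain ⟨b, hb⟩ := ZMod.intCast_surjective (v : ZMod (2 ^ k))
  have hdvd : (2 : ℤ) ∣ b - a := even_iff_two_dvd.mp <|
    (odd_of_isUnit (hb ▸ v.isUnit)).sub_odd (odd_of_isUnit (ha ▸ u.isUnit))
  rw [← ha, ← hb]
  simpa using (Int.castRingHom (ZMod (2 ^ k))).map_dvd hdvd

theorem card_stationaryUnits_zmod_odd_prime_pow_le (hp2 : p ≠ 2) {k : ℕ} (hk : k ≠ 0)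
    {m : ZMod (p ^ k)} (hm : IsUnit m) (n : ZMod (p ^ k)) (a : ℕ) :
    #(stationaryUnits m n ((p : ZMod (p ^ k)) ^ a)) ≤ 2 * p ^ a := by
  have := isLocalRing_zmod_prime_pow (p := p) hk
  have h2 := isUnit_two_zmod_prime_pow hp2 k
  refine (card_stationaryUnits_le (fun _ _ ↦ h2.dvd) hm n _).trans ?_
  simp_rw [mul_assoc, h2.mul_right_eq_zero]
  exact_mod_cast Nat.mul_le_mul_left 2 (card_mul_eq_zero_zmod_le (p ^ k) (pow_pos hp.out.pos a))

theorem card_stationaryUnits_zmod_two_pow_le {k : ℕ} (hk : k ≠ 0) {m : ZMod (2 ^ k)}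
    (hm : IsUnit m) (n : ZMod (2 ^ k)) (a : ℕ) :
    #(stationaryUnits m n ((2 : ZMod (2 ^ k)) ^ a)) ≤ 4 * 2 ^ a := by
  have := isLocalRing_zmod_prime_pow (p := 2) hk
  refine (card_stationaryUnits_le (two_dvd_units_sub_units_zmod_two_pow hk) hm n _).trans ?_
  have := card_mul_eq_zero_zmod_le (2 ^ k) (pow_pos two_pos (a + 1))
  rw [← pow_succ']
  push_cast at this
  omega

/- With `P = p ^ ⌈k/2⌉` and `Q = p ^ ⌊k/2⌋`, at most `2 P` Gauss sums of absolute value at most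
`√(p ^ k) Q` contribute. -/
theorem norm_kloostermanSum_zmod_odd_prime_pow_le (hp2 : p ≠ 2) {k : ℕ} (hk : 2 ≤ k)
    {ψ : AddChar (ZMod (p ^ k)) ℂ} (hψ : ψ.IsPrimitive) {m n : ZMod (p ^ k)} (hm : IsUnit m)
    (hn : IsUnit n) : ‖kloostermanSum ψ m n‖ ≤ 2 * √((p ^ k : ℕ) : ℝ) := by
  set a := (k + 1) / 2 with ha
  set b := k / 2 with hb
  have hstat : (#(stationaryUnits m n ((p : ZMod (p ^ k)) ^ a)) : ℝ) ≤ 2 * p ^ a := by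
    exact_mod_cast card_stationaryUnits_zmod_odd_prime_pow_le hp2 (by omega) hm n a
  have hann : #{x : ZMod (p ^ k) | ((p : ZMod (p ^ k)) ^ b) ^ 2 * x = 0} ≤ (p ^ b) ^ 2 := by
    exact_mod_cast card_mul_eq_zero_zmod_le (p ^ k) (pow_pos (pow_pos hp.out.pos b) 2)
  have havg := card_mul_norm_kloostermanSum_le hψ m hn (isUnit_two_zmod_prime_pow hp2 k)
    (P := (p : ZMod (p ^ k)) ^ a) (Q := (p : ZMod (p ^ k)) ^ b)
    (by rw [← pow_add]; exact natCast_pow_zmod_pow_eq_zero (by omega))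
    (by rw [← pow_add]; exact natCast_pow_zmod_pow_eq_zero (by omega))
    (by rw [← pow_mul]; exact natCast_pow_zmod_pow_eq_zero (by omega))
  rw [ZMod.card] at havg
  have hsplit : ((p ^ k : ℕ) : ℝ) = p ^ a * p ^ b := by
    rw [← pow_add, show a + b = k by omega, Nat.cast_pow]
  have hpos : (0 : ℝ) < (p ^ k : ℕ) := by exact_mod_cast pow_pos hp.out.pos k
  refine le_of_mul_le_mul_left (havg.trans ?_) hpos
  calc _ ≤ (2 * p ^ a : ℝ) * √((p ^ k : ℕ) * ((p ^ b : ℝ) ^ 2)) := by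
        gcongr
        exact_mod_cast hann
    _ = (p ^ k : ℕ) * (2 * √((p ^ k : ℕ) : ℝ)) := by
        rw [Real.sqrt_mul hpos.le, Real.sqrt_sq (by positivity)]
        nth_rewrite 2 [hsplit]
        ring

theorem norm_kloostermanSum_zmod_two_pow_le {k : ℕ} (hk : k ≠ 0)
    {ψ : AddChar (ZMod (2 ^ k)) ℂ} (hψ : ψ.IsPrimitive) {m : ZMod (2 ^ k)} (hm : IsUnit m)
    (n : ZMod (2 ^ k)) : ‖kloostermanSum ψ m n‖ ≤ (k + 1) * √((2 ^ k : ℕ) : ℝ) := by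
  suffices h : ∃ B : ℕ, ‖kloostermanSum ψ m n‖ ≤ B ∧ B ^ 2 ≤ (k + 1) ^ 2 * 2 ^ k by
    obtain ⟨B, hB, hsq⟩ := h
    refine hB.trans (abs_le_of_sq_le_sq' ?_ (by positivity)).2
    rw [mul_pow, Real.sq_sqrt (by positivity)]
    exact_mod_cast hsq
  obtain hk4 | hk5 := le_or_gt k 4
  · refine ⟨Fintype.card (ZMod (2 ^ k))ˣ, norm_kloostermanSum_le_card_units ψ m n, ?_⟩
    rw [ZMod.card_units_eq_totient, Nat.totient_prime_pow Nat.prime_two hk.bot_lt]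
    interval_cases k <;> simp_all
  · have hP : (2 : ZMod (2 ^ k)) ^ ((k + 1) / 2) * 2 ^ ((k + 1) / 2) = 0 := by
      rw [← pow_add]
      exact natCast_pow_zmod_pow_eq_zero (p := 2) (by omega)
    refine ⟨_, norm_kloostermanSum_le_card_stationaryUnits hψ m n hP, ?_⟩
    calc _ ≤ (4 * 2 ^ ((k + 1) / 2)) ^ 2 := by
          gcongr
          exact card_stationaryUnits_zmod_two_pow_le hk hm n _
      _ = 16 * 2 ^ ((k + 1) / 2 * 2) := by rw [mul_pow, ← pow_mul]; norm_num
      _ ≤ 16 * 2 ^ (k + 1) := by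
          gcongr
          · norm_num
          · omega
      _ = 32 * 2 ^ k := by ring
      _ ≤ (k + 1) ^ 2 * 2 ^ k := by
          gcongr
          nlinarith

theorem kloostermanSum_zero_right {F : Type*} [Field F] [Finite F] {ψ : AddChar F ℂ}
    (hψ : ψ ≠ 1) {m : F} (hm : m ≠ 0) : kloostermanSum ψ m 0 = -1 := by
  classical
  have := Fintype.ofFinite F
  have hsum : ∑ x : F, ψ (x * m) = 0 := by
    rw [AddChar.sum_mulShift _ (AddChar.IsPrimitive.of_ne_one hψ), if_neg hm, Nat.cast_zero]
  have hite (x : F) : (if x = 0 then 0 else ψ (m * x + 0 * x⁻¹)) =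
      ψ (x * m) - if x = 0 then 1 else 0 := by
    split_ifs with hx
    · simp [hx]
    · simp [mul_comm]
  rw [kloostermanSum_eq_sum_ite, sum_congr rfl fun x _ ↦ hite x, sum_sub_distrib, hsum]
  simp

theorem norm_kloostermanSum_zmod_prime_le_of_not_dvd_left {m n : ℤ} (hm : ¬(p : ℤ) ∣ m) :
    ‖kloostermanSum (ZMod.stdAddChar (N := p)) m n‖ ≤ 2 * √p := by
  have hψ : ZMod.stdAddChar (N := p) ≠ 1 := by
    simpa using ZMod.isPrimitive_stdAddChar p one_ne_zero
  have hsqrt : 1 ≤ √(p : ℝ) := Real.one_le_sqrt.mpr (by exact_mod_cast hp.out.one_le)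
  have hm0 : (m : ZMod p) ≠ 0 := by rwa [Ne, ZMod.intCast_zmod_eq_zero_iff_dvd]
  obtain hn0 | hn0 := eq_or_ne (n : ZMod p) 0
  · rw [hn0, kloostermanSum_zero_right hψ hm0, norm_neg, norm_one]
    linarith
  obtain rfl | hp2 := eq_or_ne p 2
  · refine (norm_kloostermanSum_le_card_units _ _ _).trans ?_
    rw [ZMod.card_units_eq_totient, Nat.totient_two, Nat.cast_one]
    linarith
  · exact norm_kloostermanSum_zmod_prime_le hp2 (Units.mk0 _ hm0) (Units.mk0 _ hn0) hψ

theorem norm_kloostermanSum_zmod_prime_pow_le_of_not_dvd_left {k : ℕ} (hk : k ≠ 0) {m n : ℤ}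
    (hm : ¬(p : ℤ) ∣ m) :
    ‖kloostermanSum (ZMod.stdAddChar (N := p ^ k)) m n‖ ≤ (k + 1) * √((p ^ k : ℕ) : ℝ) := by
  have hψ := ZMod.isPrimitive_stdAddChar (p ^ k)
  have h2k : (2 : ℝ) ≤ k + 1 := by exact_mod_cast Nat.succ_le_succ hk.bot_lt
  have hmu : IsUnit (m : ZMod (p ^ k)) := (isUnit_intCast_zmod_prime_pow_iff hk m).mpr hm
  obtain rfl | hk1 := eq_or_ne k 1
  · have : Fact (p ^ 1).Prime := by rwa [pow_one]
    refine (norm_kloostermanSum_zmod_prime_le_of_not_dvd_left (p := p ^ 1) ?_).trans ?_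
    · rwa [pow_one]
    · gcongr
  by_cases hn : (p : ℤ) ∣ n
  · have := isLocalRing_zmod_prime_pow (p := p) hk
    rw [kloostermanSum_eq_zero_of_isUnit_of_not_isUnit hψ hmu (P := (p : ZMod (p ^ k)) ^ (k - 1)),
      norm_zero]
    · positivity
    · rwa [isUnit_intCast_zmod_prime_pow_iff hk, not_not]
    · rw [← pow_add]
      exact natCast_pow_zmod_pow_eq_zero (by omega)
    · rw [← Nat.cast_pow, Ne, ZMod.natCast_eq_zero_iff,
        Nat.pow_dvd_pow_iff_le_right hp.out.one_lt]
      omega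
  obtain rfl | hp2 := eq_or_ne p 2
  · exact norm_kloostermanSum_zmod_two_pow_le hk hψ hmu n
  · refine (norm_kloostermanSum_zmod_odd_prime_pow_le hp2 (by omega) hψ hmu
      ((isUnit_intCast_zmod_prime_pow_iff hk n).mpr hn)).trans ?_
    gcongr

theorem norm_kloostermanSum_zmod_prime_pow_le_of_not_dvd_gcd {k : ℕ} (hk : k ≠ 0) {m n : ℤ}
    (hmn : ¬(p : ℤ) ∣ Int.gcd m n) :
    ‖kloostermanSum (ZMod.stdAddChar (N := p ^ k)) m n‖ ≤ (k + 1) * √((p ^ k : ℕ) : ℝ) := by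
  rw [Int.dvd_coe_gcd_iff, not_and_or] at hmn
  obtain hm | hn := hmn
  · exact norm_kloostermanSum_zmod_prime_pow_le_of_not_dvd_left hk hm
  · rw [kloostermanSum_comm]
    exact norm_kloostermanSum_zmod_prime_pow_le_of_not_dvd_left hk hn

theorem card_mul_sum_comp_monoidHom {G H A : Type*} [Group G] [Group H] [Fintype G] [Fintype H]
    [CommSemiring A] {f : G →* H} (hf : Function.Surjective f) (F : H → A) :
    Fintype.card H * ∑ g, F (f g) = Fintype.card G * ∑ h, F h := by
  classical
  have hfiber (h : H) : #{g | f g = h} = #{g | f g = 1} :=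
    MonoidHom.card_fiber_eq_of_mem_range f (hf h) (hf 1)
  have hcard : Fintype.card G = Fintype.card H * #{g | f g = 1} := by
    rw [← card_univ, card_eq_sum_card_fiberwise (t := univ) (f := f) (by simp),
      sum_congr rfl fun h _ ↦ hfiber h, sum_const, smul_eq_mul, card_univ]
  have hsum : ∑ g, F (f g) = #{g | f g = 1} * ∑ h, F h := by
    rw [← sum_fiberwise (s := univ) (g := f), mul_sum]
    refine sum_congr rfl fun h _ ↦ ?_
    rw [sum_congr rfl fun g hg ↦ by rw [(mem_filter.mp hg).2], sum_const, hfiber, nsmul_eq_mul]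
  rw [hsum, hcard, Nat.cast_mul, mul_assoc]

theorem stdAddChar_mul_intCast {d M N : ℕ} [NeZero M] [NeZero N] (hN : N = d * M) (x : ℤ) :
    ZMod.stdAddChar ((d * x : ℤ) : ZMod N) = ZMod.stdAddChar (x : ZMod M) := by
  subst hN
  have hd : (d : ℂ) ≠ 0 := by exact_mod_cast left_ne_zero_of_mul (NeZero.ne (d * M))
  rw [ZMod.stdAddChar_coe, ZMod.stdAddChar_coe]
  congr 1
  push_cast
  field_simp

theorem totient_mul_kloostermanSum_mul {d M N : ℕ} [NeZero M] [NeZero N] (hN : N = d * M)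
    (m n : ℤ) :
    M.totient * kloostermanSum (ZMod.stdAddChar (N := N)) (d * m : ℤ) (d * n : ℤ) =
      N.totient * kloostermanSum (ZMod.stdAddChar (N := M)) m n := by
  have hd : M ∣ N := hN ▸ dvd_mul_left M d
  have hfiber := card_mul_sum_comp_monoidHom (ZMod.unitsMap_surjective hd) fun v : (ZMod M)ˣ ↦
    ZMod.stdAddChar (N := M) (m * v + n * ↑v⁻¹)
  rw [ZMod.card_units_eq_totient, ZMod.card_units_eq_totient] at hfiber
  rw [kloostermanSum_eq_sum, kloostermanSum_eq_sum, ← hfiber]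
  congr 1
  refine sum_congr rfl fun u _ ↦ ?_
  have hval (w : (ZMod N)ˣ) : (ZMod.unitsMap hd w : ZMod M) = ZMod.castHom hd (ZMod M) w := rfl
  obtain ⟨a, ha⟩ := ZMod.intCast_surjective (u : ZMod N)
  obtain ⟨b, hb⟩ := ZMod.intCast_surjective (↑u⁻¹ : ZMod N)
  rw [← map_inv, hval, hval, ← ha, ← hb, map_intCast, map_intCast]
  have := stdAddChar_mul_intCast hN (m * a + n * b)
  push_cast at this ⊢
  rw [← this]
  ring_nf

theorem norm_kloostermanSum_mul_le {M N : ℕ} [NeZero M] [NeZero N] (hN : N = p * M) (m n : ℤ) :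
    ‖kloostermanSum (ZMod.stdAddChar (N := N)) (p * m : ℤ) (p * n : ℤ)‖ ≤
      p * ‖kloostermanSum (ZMod.stdAddChar (N := M)) m n‖ := by
  have htotient : N.totient ≤ p * M.totient := by
    rw [hN]
    by_cases hpM : p ∣ M
    · exact (Nat.totient_mul_of_prime_of_dvd hp.out hpM).le
    · rw [Nat.totient_mul_of_prime_of_not_dvd hp.out hpM]
      exact Nat.mul_le_mul_right _ (Nat.sub_le p 1)
  have hpos : (0 : ℝ) < M.totient := by
    exact_mod_cast Nat.totient_pos.mpr (Nat.pos_of_neZero M)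
  refine le_of_mul_le_mul_left ?_ hpos
  calc _ = N.totient * ‖kloostermanSum (ZMod.stdAddChar (N := M)) m n‖ := by
        simpa using congrArg norm (totient_mul_kloostermanSum_mul hN m n)
    _ ≤ (p * M.totient : ℕ) * ‖kloostermanSum (ZMod.stdAddChar (N := M)) m n‖ := by gcongr
    _ = M.totient * (p * ‖kloostermanSum (ZMod.stdAddChar (N := M)) m n‖) := by
        push_cast
        ring

theorem norm_kloostermanSum_zmod_prime_pow_le (k : ℕ) (m n : ℤ) :
    ‖kloostermanSum (ZMod.stdAddChar (N := p ^ k)) m n‖ ≤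
      √(Nat.gcd (Int.gcd m n) (p ^ k)) * √((p ^ k : ℕ) : ℝ) * (k + 1) := by
  induction k generalizing m n with
  | zero =>
    refine (norm_kloostermanSum_le_card_units _ _ _).trans ?_
    rw [ZMod.card_units_eq_totient]
    simp
  | succ k ih =>
    by_cases hmn : (p : ℤ) ∣ Int.gcd m n
    · obtain ⟨⟨m, rfl⟩, ⟨n, rfl⟩⟩ := Int.dvd_coe_gcd_iff.mp hmn
      have hgcd : Nat.gcd (Int.gcd (p * m) (p * n)) (p ^ (k + 1)) =
          p * Nat.gcd (Int.gcd m n) (p ^ k) := by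
        rw [Int.gcd_mul_left, Int.natAbs_natCast, pow_succ', Nat.gcd_mul_left]
      calc _ ≤ p * ‖kloostermanSum (ZMod.stdAddChar (N := p ^ k)) m n‖ :=
            norm_kloostermanSum_mul_le (pow_succ' p k) m n
        _ ≤ p * (√(Nat.gcd (Int.gcd m n) (p ^ k)) * √((p ^ k : ℕ) : ℝ) * ((k + 1 : ℕ) + 1)) := by
            gcongr
            refine (ih m n).trans ?_
            gcongr
            exact k.le_succ
        _ = _ := by
            rw [hgcd, pow_succ', Nat.cast_mul, Nat.cast_mul, Real.sqrt_mul p.cast_nonneg,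
              Real.sqrt_mul p.cast_nonneg]
            nth_rewrite 1 [← Real.mul_self_sqrt p.cast_nonneg]
            ring
    · have hbound := norm_kloostermanSum_zmod_prime_pow_le_of_not_dvd_gcd k.succ_ne_zero hmn
      have hgcd : 1 ≤ √(Nat.gcd (Int.gcd m n) (p ^ (k + 1)) : ℝ) := by
        rw [Real.one_le_sqrt]
        exact_mod_cast Nat.gcd_pos_of_pos_right _ (pow_pos hp.out.pos _)
      rw [mul_assoc, mul_comm (√((p ^ (k + 1) : ℕ) : ℝ))]
      exact hbound.trans (le_mul_of_one_le_left (by positivity) hgcd)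

end PrimePowers

section Multiplicativity

theorem kloostermanSum_mulShift {R : Type*} [CommRing R] (ψ : AddChar R ℂ) (t m n : R) :
    kloostermanSum (ψ.mulShift t) m n = kloostermanSum ψ (t * m) (t * n) := by
  simp only [kloostermanSum, AddChar.mulShift_apply, mul_add, mul_assoc]

theorem kloostermanSum_of_ringEquiv_prod {A R S : Type*} [CommRing A] [CommRing R] [CommRing S]
    [Finite Rˣ] [Finite Sˣ] {χ : AddChar A ℂ} {ψ : AddChar R ℂ} {φ : AddChar S ℂ}
    (f : A ≃+* R × S) (hf : ∀ x, χ x = ψ (f x).1 * φ (f x).2) (m n : A) :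
    kloostermanSum χ m n =
      kloostermanSum ψ (f m).1 (f n).1 * kloostermanSum φ (f m).2 (f n).2 := by
  have := Fintype.ofFinite Rˣ
  have := Fintype.ofFinite Sˣ
  let E : Aˣ ≃* Rˣ × Sˣ := (Units.mapEquiv f.toMulEquiv).trans MulEquiv.prodUnits
  have := Fintype.ofEquiv _ E.symm.toEquiv
  rw [kloostermanSum_eq_sum, kloostermanSum_eq_sum, kloostermanSum_eq_sum, sum_mul_sum,
    ← Fintype.sum_prod_type']
  refine Fintype.sum_equiv E.toEquiv _ _ fun u ↦ ?_
  rw [hf, map_add, map_mul, map_mul]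
  rfl

theorem stdAddChar_chineseRemainder {a b : ℕ} [NeZero a] [NeZero b] (hab : a.Coprime b) {s t : ℤ}
    (hst : s * a + t * b = 1) (x : ZMod (a * b)) :
    ZMod.stdAddChar x = ZMod.stdAddChar.mulShift (t : ZMod a) (ZMod.chineseRemainder hab x).1 *
      ZMod.stdAddChar.mulShift (s : ZMod b) (ZMod.chineseRemainder hab x).2 := by
  obtain ⟨x, rfl⟩ := ZMod.intCast_surjective x
  have ha : (a : ℂ) ≠ 0 := by exact_mod_cast NeZero.ne a
  have hb : (b : ℂ) ≠ 0 := by exact_mod_cast NeZero.ne b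
  have hst : (s * a + t * b : ℂ) = 1 := by exact_mod_cast hst
  rw [map_intCast (ZMod.chineseRemainder hab), Prod.fst_intCast, Prod.snd_intCast,
    AddChar.mulShift_apply, AddChar.mulShift_apply, ← Int.cast_mul, ← Int.cast_mul,
    ZMod.stdAddChar_coe, ZMod.stdAddChar_coe, ZMod.stdAddChar_coe, ← Complex.exp_add]
  congr 1
  push_cast
  field_simp
  linear_combination -(x : ℂ) * hst

theorem kloostermanSum_zmod_mul {a b : ℕ} [NeZero a] [NeZero b] (hab : a.Coprime b) {s t : ℤ}
    (hst : s * a + t * b = 1) (m n : ℤ) :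
    kloostermanSum (ZMod.stdAddChar (N := a * b)) m n =
      kloostermanSum (ZMod.stdAddChar (N := a)) (t * m : ℤ) (t * n : ℤ) *
        kloostermanSum (ZMod.stdAddChar (N := b)) (s * m : ℤ) (s * n : ℤ) := by
  rw [kloostermanSum_of_ringEquiv_prod _ (stdAddChar_chineseRemainder hab hst),
    kloostermanSum_mulShift, kloostermanSum_mulShift]
  simp only [map_intCast, Prod.fst_intCast, Prod.snd_intCast, Int.cast_mul]

theorem gcd_gcd_mul_left_of_isCoprime {a : ℕ} {t : ℤ} (h : IsCoprime t a) (m n : ℤ) :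
    Nat.gcd (Int.gcd (t * m) (t * n)) a = Nat.gcd (Int.gcd m n) a := by
  rw [Int.gcd_mul_left]
  exact Nat.Coprime.gcd_mul_left_cancel _ (Int.isCoprime_iff_gcd_eq_one.mp h)

end Multiplicativity

theorem norm_kloostermanSum_stdAddChar_le (c : ℕ) [hc : NeZero c] (m n : ℤ) :
    ‖kloostermanSum (ZMod.stdAddChar (N := c)) m n‖ ≤
      √(Nat.gcd (Int.gcd m n) c) * √c * #c.divisors := by
  induction c using Nat.recOnPosPrimePosCoprime generalizing hc m n with
  | zero => exact absurd rfl hc.out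
  | one =>
    refine (norm_kloostermanSum_le_card_units _ _ _).trans ?_
    rw [ZMod.card_units_eq_totient]
    simp
  | prime_pow p k hp _ =>
    have : Fact p.Prime := ⟨hp⟩
    rw [Nat.divisors_prime_pow hp, card_map, card_range]
    exact_mod_cast norm_kloostermanSum_zmod_prime_pow_le k m n
  | coprime a b ha hb hab iha ihb =>
    have : NeZero a := ⟨by omega⟩
    have : NeZero b := ⟨by omega⟩
    obtain ⟨s, t, hst⟩ := Nat.isCoprime_iff_coprime.mpr hab
    rw [kloostermanSum_zmod_mul hab hst m n, norm_mul]
    refine (mul_le_mul (iha _ _) (ihb _ _) (norm_nonneg _) (by positivity)).trans_eq ?_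
    rw [gcd_gcd_mul_left_of_isCoprime ⟨b, s, by linear_combination hst⟩,
      gcd_gcd_mul_left_of_isCoprime ⟨a, t, by linear_combination hst⟩,
      Nat.Coprime.card_divisors_mul hab, Nat.Coprime.gcd_mul _ hab, Nat.cast_mul, Nat.cast_mul,
      Nat.cast_mul, Real.sqrt_mul (Nat.cast_nonneg _), Real.sqrt_mul (Nat.cast_nonneg _)]
    ring

theorem sum_e_eq_kloostermanSum (c : ℕ) [NeZero c] (m n : ℤ) :
    ∑ u : (ZMod c)ˣ,
        e (((m * (((u : ZMod c)).val : ℤ) + n * (((u⁻¹ : (ZMod c)ˣ) : ZMod c).val : ℤ) : ℤ) : ℝ)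
          / (c : ℝ)) = kloostermanSum (ZMod.stdAddChar (N := c)) m n := by
  have e_div (x : ℤ) : e ((x : ℝ) / c) = ZMod.stdAddChar (x : ZMod c) := by
    rw [e, ZMod.stdAddChar_coe, Complex.ofReal_div, Complex.ofReal_intCast, Complex.ofReal_natCast,
      mul_div_assoc]
  rw [kloostermanSum_eq_sum]
  refine sum_congr rfl fun u _ ↦ ?_
  rw [e_div]
  push_cast
  rw [ZMod.natCast_zmod_val, ZMod.natCast_zmod_val]

/-- **Weil's bound for Kloosterman sums.**  For any positive integer `c` and integers
`m`, `n`, `|∑_{ad ≡ 1 (mod c)} e((ma + nd)/c)| ≤ gcd(m,n,c)^{1/2} c^{1/2} τ(c)`,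
where `τ` is the divisor-counting function. -/
theorem weil_bound_kloosterman (c : ℕ) [NeZero c] (m n : ℤ) :
    ‖∑ u : (ZMod c)ˣ,
        e (((m * (((u : ZMod c)).val : ℤ) + n * (((u⁻¹ : (ZMod c)ˣ) : ZMod c).val : ℤ) : ℤ) : ℝ)
          / (c : ℝ))‖ ≤
      Real.sqrt (Nat.gcd (Int.gcd m n) c : ℝ) * Real.sqrt (c : ℝ) *
        ((Nat.divisors c).card : ℝ) := by
  rw [sum_e_eq_kloostermanSum]
  exact norm_kloostermanSum_stdAddChar_le c m n
end
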